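/- arXiv:1911.07804 — 4 statements merged into one kernel-verified Lean document; each statement's English description precedes it below -/
import Mathlib

section
/- Let n ≥ 3 and let F = (F_{ij})_{0≤i,j≤n} be a symmetric 2-tensor field on ℝ^{1+n} whose components are smooth and compactly supported, with δF = 0 and trace(F) = 0. Let θ₀ = (1,0,…,0) ∈ S^{n−1} and suppose there is a neighborhood U of θ₀ in S^{n−1} such that Σ_{i,j=0}^n θ̃^i θ̃^j F̂_{ij}(ζ) = 0 for all θ ∈ U and all ζ ∈ ℝ^{1+n} with ζ·(1,θ) = 0. Then there is an open cone C ⊂ ℝ^{1+n} (an open set closed under multiplication by positive scalars) containing the space-like vector ζ₀ = (0,0,1,0,…,0) such that F̂_{ij}(ζ) = 0 for all ζ ∈ C and all 0 ≤ i,j ≤ n. -/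
/-- For `θ ∈ Sⁿ⁻¹`, the light direction `θ̃ = (1, θ) ∈ ℝ^{1+n}`. -/
def lightDir (n : ℕ) (θ : Fin n → ℝ) : Fin (n + 1) → ℝ :=
  Fin.cons 1 θ

/-- The Fourier transform `F̂ᵢⱼ(ζ) = ∫ Fᵢⱼ(z) e^{−i z·ζ} dz`. -/
noncomputable def fourierComp (n : ℕ)
    (F : Fin (n + 1) → Fin (n + 1) → (Fin (n + 1) → ℝ) → ℂ)
    (i j : Fin (n + 1)) (ζ : Fin (n + 1) → ℝ) : ℂ :=
  ∫ z : Fin (n + 1) → ℝ,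
    F i j z * Complex.exp (-Complex.I * ∑ k, (z k : ℂ) * (ζ k : ℂ))

/-!
Fix a space-like `ζ`. Integrating by parts, `F̂(ζ)` is a symmetric form which annihilates `ζ` and
has trace zero. The light directions orthogonal to `ζ` form a sphere `T + {q ∈ W : ‖q‖ = r}`, where
`W = {ζ, T}ᗮ` has dimension `n - 1 ≥ 2` and `r ^ 2 = 2 - ‖T‖ ^ 2`. If the quadratic form vanishes on
this sphere near one point, it vanishes on all of it, by analyticity along great circles. Comparing
`T + q` with `T - q` then gives `F̂(T, q) = 0` and `r ^ 2 F̂(q, q) = -‖q‖ ^ 2 F̂(T, T)` on `W`, so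
that `F̂(ζ)` is determined by `F̂(T, T)`, and its trace is a nonzero multiple of `F̂(T, T)` because
`‖T‖ ≥ 1` and `n ≥ 3`. Hence `F̂(ζ) = 0`.

Every `ζ` near `ζ₀` is orthogonal to a light direction near `(1, θ₀)`: along the great circle
through `θ₀` in the direction of the component of `ζ₀` orthogonal to `θ₀`, the function
`θ ↦ ζ · (1, θ)` changes sign.
-/

open Filter Metric Module Real
open scoped InnerProductSpace Pointwise Topology

section GreatCircle

variable {E : Type*} [NormedAddCommGroup E] [InnerProductSpace ℝ E]

/-- The great circle `s ↦ cos s • x + sin s • u`, for orthogonal `x` and `u` of equal norm. It is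
the curve along which both analytic continuation and the intermediate value theorem are applied. -/
noncomputable def greatCircle (x u : E) (s : ℝ) : E :=
  cos s • x + sin s • u

@[simp]
lemma greatCircle_zero (x u : E) : greatCircle x u 0 = x := by
  simp [greatCircle]

@[fun_prop]
lemma analyticAt_greatCircle (x u : E) (s : ℝ) : AnalyticAt ℝ (greatCircle x u) s := by
  unfold greatCircle
  fun_prop

@[fun_prop]
lemma continuous_greatCircle (x u : E) : Continuous (greatCircle x u) := by
  unfold greatCircle
  fun_prop

lemma norm_greatCircle {x u : E} (hnorm : ‖u‖ = ‖x‖) (hxu : ⟪x, u⟫_ℝ = 0) (s : ℝ) :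
    ‖greatCircle x u s‖ = ‖x‖ := by
  have hsq : ‖greatCircle x u s‖ ^ 2 = ‖x‖ ^ 2 := by
    rw [greatCircle, norm_add_sq_real, inner_smul_left, inner_smul_right, hxu, norm_smul, norm_smul,
      hnorm, mul_pow, mul_pow, Real.norm_eq_abs, Real.norm_eq_abs, sq_abs, sq_abs]
    linear_combination ‖x‖ ^ 2 * cos_sq_add_sin_sq s
  exact (sq_eq_sq₀ (norm_nonneg _) (norm_nonneg _)).1 hsq

lemma exists_norm_eq_one_inner_eq_zero (hE : 1 < Module.rank ℝ E) (x : E) :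
    ∃ u : E, ‖u‖ = 1 ∧ ⟪x, u⟫_ℝ = 0 := by
  have hspan : (ℝ ∙ x)ᗮ ≠ ⊥ := by
    rw [Ne, Submodule.orthogonal_eq_bot_iff]
    intro htop
    have hle := rank_span_le (R := ℝ) {x}
    rw [htop, rank_top, Cardinal.mk_singleton] at hle
    exact hE.not_ge hle
  obtain ⟨u, hu, hu0⟩ := Submodule.exists_mem_ne_zero_of_ne_bot hspan
  refine ⟨‖u‖⁻¹ • u, norm_smul_inv_norm hu0, ?_⟩
  rw [inner_smul_right, Submodule.mem_orthogonal_singleton_iff_inner_right.1 hu, mul_zero]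

lemma exists_eq_norm_smul_of_inner_eq_zero (hE : 1 < Module.rank ℝ E) {x d : E}
    (hxd : ⟪x, d⟫_ℝ = 0) : ∃ u : E, ‖u‖ = 1 ∧ ⟪x, u⟫_ℝ = 0 ∧ d = ‖d‖ • u := by
  rcases eq_or_ne d 0 with rfl | hd
  · obtain ⟨u, hu, hxu⟩ := exists_norm_eq_one_inner_eq_zero hE x
    exact ⟨u, hu, hxu, by simp⟩
  · refine ⟨‖d‖⁻¹ • d, norm_smul_inv_norm hd, ?_, ?_⟩
    · rw [inner_smul_right, hxd, mul_zero]
    · rw [smul_inv_smul₀ (norm_ne_zero_iff.2 hd)]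

lemma exists_eq_greatCircle (hE : 1 < Module.rank ℝ E) {x y : E} (hxy : ‖y‖ = ‖x‖) :
    ∃ (u : E) (s : ℝ), ‖u‖ = ‖x‖ ∧ ⟪x, u⟫_ℝ = 0 ∧ y = greatCircle x u s := by
  set s := InnerProductGeometry.angle x y
  set d := y - cos s • x with hd
  have hinner : ⟪x, y⟫_ℝ = cos s * ‖x‖ ^ 2 := by
    rw [← InnerProductGeometry.cos_angle_mul_norm_mul_norm, hxy, sq]
  have hxd : ⟪x, d⟫_ℝ = 0 := by
    rw [hd, inner_sub_right, inner_smul_right, hinner, real_inner_self_eq_norm_sq, sub_self]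
  have hnorm_d : ‖d‖ = sin s * ‖x‖ := by
    refine (sq_eq_sq₀ (norm_nonneg _) (mul_nonneg
      (InnerProductGeometry.sin_angle_nonneg x y) (norm_nonneg _))).1 ?_
    rw [hd, norm_sub_sq_real, inner_smul_right, real_inner_comm, hinner, norm_smul, hxy, mul_pow,
      Real.norm_eq_abs, sq_abs]
    linear_combination -‖x‖ ^ 2 * sin_sq_add_cos_sq s
  obtain ⟨u, hu, hxu, hdu⟩ := exists_eq_norm_smul_of_inner_eq_zero hE hxd
  refine ⟨‖x‖ • u, s, ?_, ?_, ?_⟩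
  · rw [norm_smul, hu, mul_one, norm_norm]
  · rw [inner_smul_right, hxu, mul_zero]
  · rw [greatCircle, smul_smul, ← hnorm_d, ← hdu, add_sub_cancel]

lemma eqOn_zero_sphere_of_analyticOnNhd {G : Type*} [NormedAddCommGroup G] [NormedSpace ℝ G]
    (hE : 1 < Module.rank ℝ E) {f : E → G} {r : ℝ} {p : E}
    (hf : AnalyticOnNhd ℝ f (sphere 0 r)) (hp : p ∈ sphere 0 r)
    (hfp : ∀ᶠ q in 𝓝[sphere 0 r] p, f q = 0) : Set.EqOn f 0 (sphere 0 r) := by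
  intro q hq
  rw [mem_sphere_zero_iff_norm] at hp hq
  obtain ⟨u, s, hu, hpu, rfl⟩ := exists_eq_greatCircle hE (hq.trans hp.symm)
  have hmem (t : ℝ) : greatCircle p u t ∈ sphere (0 : E) r := by
    rw [mem_sphere_zero_iff_norm, norm_greatCircle hu hpu, hp]
  have hanalytic : AnalyticOnNhd ℝ (f ∘ greatCircle p u) Set.univ := fun t _ ↦
    (hf _ (hmem t)).comp (analyticAt_greatCircle p u t)
  have htendsto : Tendsto (greatCircle p u) (𝓝 0) (𝓝[sphere 0 r] p) :=
    tendsto_nhdsWithin_of_tendsto_nhds_of_eventually_within _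
      (by simpa using (continuous_greatCircle p u).tendsto 0) (.of_forall hmem)
  exact congrFun (hanalytic.eq_of_eventuallyEq (g := 0) analyticOnNhd_const
    (htendsto.eventually hfp)) s

end GreatCircle

section BilinearMap

variable {V X E G : Type*} [AddCommGroup V] [Module ℝ V] [NormedAddCommGroup X] [NormedSpace ℝ X]
  [NormedAddCommGroup E] [InnerProductSpace ℝ E] [AddCommGroup G] [Module ℝ G]
  {B : E →ₗ[ℝ] E →ₗ[ℝ] G}

lemma apply_apply_eq_zero_of_apply_self_eq_zero {B : V →ₗ[ℝ] V →ₗ[ℝ] G}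
    (hsymm : ∀ x y, B x y = B y x) (hself : ∀ x, B x x = 0) (x y : V) : B x y = 0 := by
  have hadd := hself (x + y)
  simp only [map_add, LinearMap.add_apply, hself, hsymm y x, zero_add, add_zero] at hadd
  linear_combination (norm := module) (1 / 2 : ℝ) • hadd

lemma apply_eq_zero_and_smul_apply_self_of_sphere {B : X →ₗ[ℝ] X →ₗ[ℝ] G} {W : Submodule ℝ X}
    {T : X} {r : ℝ} (hr : 0 < r) (hsymm : ∀ x y, B x y = B y x)
    (hB : ∀ q : W, ‖q‖ = r → B (T + q) (T + q) = 0) (q : W) :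
    B T q = 0 ∧ r ^ 2 • B q q = -(‖q‖ ^ 2 • B T T) := by
  rcases eq_or_ne q 0 with rfl | hq
  · simp
  have hq0 : ‖q‖ ≠ 0 := norm_ne_zero_iff.2 hq
  have hnorm : ‖(r / ‖q‖) • q‖ = r := by
    rw [norm_smul, norm_div, norm_norm, div_mul_cancel₀ _ hq0, norm_of_nonneg hr.le]
  have hpos := hB ((r / ‖q‖) • q) hnorm
  have hneg := hB (-((r / ‖q‖) • q)) (by rw [norm_neg, hnorm])
  simp only [Submodule.coe_neg, Submodule.coe_smul, map_add, map_neg, map_smul,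
    LinearMap.add_apply, LinearMap.neg_apply, LinearMap.smul_apply, hsymm q T] at hpos hneg
  constructor
  · linear_combination (norm := skip) (‖q‖ / (4 * r)) • hpos - (‖q‖ / (4 * r)) • hneg
    match_scalars <;> field_simp <;> ring
  · linear_combination (norm := skip) (‖q‖ ^ 2 / 2) • hpos + (‖q‖ ^ 2 / 2) • hneg
    match_scalars <;> field_simp <;> ring

lemma exists_eq_smul_add_smul_add {ζ T : E} (hζ : ζ ≠ 0) (hT : T ≠ 0) (hζT : ⟪ζ, T⟫_ℝ = 0) (x : E) :
    ∃ q : E, ⟪ζ, q⟫_ℝ = 0 ∧ ⟪T, q⟫_ℝ = 0 ∧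
      x = (⟪ζ, x⟫_ℝ / ‖ζ‖ ^ 2) • ζ + (⟪T, x⟫_ℝ / ‖T‖ ^ 2) • T + q ∧
      ‖q‖ ^ 2 = ‖x‖ ^ 2 - ⟪ζ, x⟫_ℝ ^ 2 / ‖ζ‖ ^ 2 - ⟪T, x⟫_ℝ ^ 2 / ‖T‖ ^ 2 := by
  have hζ2 : ‖ζ‖ ≠ 0 := norm_ne_zero_iff.2 hζ
  have hT2 : ‖T‖ ≠ 0 := norm_ne_zero_iff.2 hT
  have hTζ : ⟪T, ζ⟫_ℝ = 0 := (real_inner_comm _ _).trans hζT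
  refine ⟨x - (⟪ζ, x⟫_ℝ / ‖ζ‖ ^ 2) • ζ - (⟪T, x⟫_ℝ / ‖T‖ ^ 2) • T, ?_, ?_, by abel, ?_⟩
  · simp only [inner_sub_right, inner_smul_right, hζT, real_inner_self_eq_norm_sq]
    field_simp
    ring
  · simp only [inner_sub_right, inner_smul_right, hTζ, real_inner_self_eq_norm_sq]
    field_simp
    ring
  · rw [← real_inner_self_eq_norm_sq]
    simp only [inner_sub_left, inner_sub_right, real_inner_smul_left, inner_smul_right, hζT, hTζ,
      real_inner_self_eq_norm_sq, real_inner_comm ζ x, real_inner_comm T x]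
    field_simp
    ring

lemma smul_apply_self_eq {ζ T : E} (hζ : ζ ≠ 0) (hT : T ≠ 0) (hζT : ⟪ζ, T⟫_ℝ = 0) {ρ : ℝ}
    (hsymm : ∀ x y, B x y = B y x) (hBζ : B ζ = 0)
    (hB : ∀ q, ⟪ζ, q⟫_ℝ = 0 → ⟪T, q⟫_ℝ = 0 →
      B T q = 0 ∧ ρ • B q q = -(‖q‖ ^ 2 • B T T)) (x : E) :
    ρ • B x x = (ρ * ⟪T, x⟫_ℝ ^ 2 / ‖T‖ ^ 4 -
      (‖x‖ ^ 2 - ⟪ζ, x⟫_ℝ ^ 2 / ‖ζ‖ ^ 2 - ⟪T, x⟫_ℝ ^ 2 / ‖T‖ ^ 2)) • B T T := by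
  obtain ⟨q, hζq, hTq, hx, hq⟩ := exists_eq_smul_add_smul_add hζ hT hζT x
  obtain ⟨hBTq, hBqq⟩ := hB q hζq hTq
  have hBxx : B x x = (⟪T, x⟫_ℝ / ‖T‖ ^ 2) ^ 2 • B T T + B q q := by
    nth_rw 1 2 [hx]
    simp only [map_add, map_smul, LinearMap.add_apply, LinearMap.smul_apply, hsymm _ ζ, hBζ,
      hsymm q T, hBTq, LinearMap.zero_apply]
    module
  rw [hBxx, smul_add, hBqq, hq]
  match_scalars
  ring

lemma eq_zero_of_trace_eq_zero {ι : Type*} [Fintype ι] (b : OrthonormalBasis ι ℝ E)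
    {ζ T : E} (hζ : ζ ≠ 0) (hT : T ≠ 0) (hζT : ⟪ζ, T⟫_ℝ = 0) {ρ : ℝ} (hρ : ρ ≠ 0)
    (hcard : ρ ≠ (Fintype.card ι - 2) * ‖T‖ ^ 2)
    (hsymm : ∀ x y, B x y = B y x) (hBζ : B ζ = 0) (htrace : ∑ i, B (b i) (b i) = 0)
    (hB : ∀ q, ⟪ζ, q⟫_ℝ = 0 → ⟪T, q⟫_ℝ = 0 →
      B T q = 0 ∧ ρ • B q q = -(‖q‖ ^ 2 • B T T)) : B = 0 := by
  have hself := smul_apply_self_eq hζ hT hζT hsymm hBζ hB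
  have hζ2 : ‖ζ‖ ≠ 0 := norm_ne_zero_iff.2 hζ
  have hT2 : ‖T‖ ≠ 0 := norm_ne_zero_iff.2 hT
  have hsum : (ρ / ‖T‖ ^ 2 - (Fintype.card ι - 2)) • B T T = 0 := by
    calc
      _ = ∑ i, ρ • B (b i) (b i) := by
        simp only [hself, ← Finset.sum_smul, Finset.sum_sub_distrib, ← Finset.sum_div,
          ← Finset.mul_sum, b.sum_sq_inner_left, b.norm_eq_one]
        congr 1
        simp only [one_pow, Finset.sum_const, Finset.card_univ, nsmul_eq_mul, mul_one]
        field_simp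
        ring
      _ = 0 := by rw [← Finset.smul_sum, htrace, smul_zero]
  have hBTT : B T T = 0 := by
    refine (smul_eq_zero.1 hsum).resolve_left fun h ↦ hcard ?_
    field_simp at h
    linarith
  ext x y
  refine apply_apply_eq_zero_of_apply_self_eq_zero hsymm (fun x ↦ ?_) x y
  refine (smul_eq_zero.1 ?_).resolve_left hρ
  rw [hself, hBTT, smul_zero]

end BilinearMap

section AnalyticContinuation

variable {X E G : Type*} [NormedAddCommGroup X] [NormedSpace ℝ X] [NormedAddCommGroup E]
  [InnerProductSpace ℝ E] [NormedAddCommGroup G] [NormedSpace ℝ G]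

lemma analyticAt_apply_self [FiniteDimensional ℝ X] (B : X →ₗ[ℝ] X →ₗ[ℝ] G) (x : X) :
    AnalyticAt ℝ (fun x ↦ B x x) x :=
  (B.toContinuousBilinearMap.analyticAt_bilinear (x, x)).comp₂ analyticAt_id analyticAt_id

lemma forall_norm_eq_apply_add_self_eq_zero [FiniteDimensional ℝ E] {B : E →ₗ[ℝ] E →ₗ[ℝ] G}
    {W : Submodule ℝ E} (hW : 1 < Module.rank ℝ W) {T : E} {r : ℝ} {p : W} (hp : ‖p‖ = r)
    (hB : ∀ᶠ q : W in 𝓝[sphere 0 r] p, B (T + q) (T + q) = 0) (q : W) (hq : ‖q‖ = r) :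
    B (T + q) (T + q) = 0 := by
  have hshift (q : W) : AnalyticAt ℝ (fun q : W ↦ T + (q : E)) q :=
    analyticAt_const.add (W.subtypeL.analyticAt q)
  have hanalytic : AnalyticOnNhd ℝ (fun q : W ↦ B (T + q) (T + q)) (sphere 0 r) := fun q _ ↦
    AnalyticAt.comp (g := fun x ↦ B x x) (analyticAt_apply_self B _) (hshift q)
  exact eqOn_zero_sphere_of_analyticOnNhd hW hanalytic (mem_sphere_zero_iff_norm.2 hp) hB
    (mem_sphere_zero_iff_norm.2 hq)

end AnalyticContinuation

section LightSlice

variable {E : Type*} [NormedAddCommGroup E] [InnerProductSpace ℝ E] {e ζ T : E}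

/-- The vectors orthogonal to `ζ` of the form `e + θ` with `θ` a unit vector orthogonal to the unit
vector `e`: the light directions, normalised to have time component `1`, orthogonal to `ζ`. -/
def lightSlice (e ζ : E) : Set E :=
  {w | ⟪e, w⟫_ℝ = 1 ∧ ‖w‖ ^ 2 = 2 ∧ ⟪ζ, w⟫_ℝ = 0}

lemma exists_orthogonal_component (hζ : ζ ≠ 0) (e : E) :
    ∃ P : E, ⟪ζ, P⟫_ℝ = 0 ∧ (∀ w, ⟪ζ, w⟫_ℝ = 0 → ⟪P, w⟫_ℝ = ⟪e, w⟫_ℝ) ∧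
      ‖P‖ ^ 2 = ‖e‖ ^ 2 - ⟪ζ, e⟫_ℝ ^ 2 / ‖ζ‖ ^ 2 := by
  have hζ2 : ‖ζ‖ ^ 2 ≠ 0 := by simpa using hζ
  set P := e - (⟪ζ, e⟫_ℝ / ‖ζ‖ ^ 2) • ζ with hP
  have hζP : ⟪ζ, P⟫_ℝ = 0 := by
    rw [hP, inner_sub_right, inner_smul_right, real_inner_self_eq_norm_sq,
      div_mul_cancel₀ _ hζ2, sub_self]
  have hPw (w : E) (hw : ⟪ζ, w⟫_ℝ = 0) : ⟪P, w⟫_ℝ = ⟪e, w⟫_ℝ := by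
    rw [hP, inner_sub_left, real_inner_smul_left, hw, mul_zero, sub_zero]
  refine ⟨P, hζP, hPw, ?_⟩
  rw [← real_inner_self_eq_norm_sq, hPw P hζP, hP, inner_sub_right, inner_smul_right,
    real_inner_self_eq_norm_sq, real_inner_comm]
  ring

lemma exists_lightSlice_center (he : ‖e‖ = 1) (hζ : 2 * ⟪ζ, e⟫_ℝ ^ 2 < ‖ζ‖ ^ 2) :
    ∃ T : E, ⟪ζ, T⟫_ℝ = 0 ∧ 1 ≤ ‖T‖ ^ 2 ∧ ‖T‖ ^ 2 < 2 ∧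
      ∀ w, ⟪ζ, w⟫_ℝ = 0 → ⟪T, w⟫_ℝ = ‖T‖ ^ 2 * ⟪e, w⟫_ℝ := by
  have hζ2 : 0 < ‖ζ‖ ^ 2 := (by positivity : 0 ≤ 2 * ⟪ζ, e⟫_ℝ ^ 2).trans_lt hζ
  have hζ0 : ζ ≠ 0 := norm_ne_zero_iff.1 (pow_ne_zero_iff two_ne_zero |>.1 hζ2.ne')
  obtain ⟨P, hζP, hPw, hP2⟩ := exists_orthogonal_component hζ0 e
  have hratio : ⟪ζ, e⟫_ℝ ^ 2 / ‖ζ‖ ^ 2 < 1 / 2 := by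
    rw [div_lt_iff₀ hζ2]
    linarith
  have hratio_nonneg : 0 ≤ ⟪ζ, e⟫_ℝ ^ 2 / ‖ζ‖ ^ 2 := by positivity
  rw [he] at hP2
  have hP_pos : 0 < ‖P‖ ^ 2 := by linarith
  have hT2 : ‖(‖P‖ ^ 2)⁻¹ • P‖ ^ 2 = (‖P‖ ^ 2)⁻¹ := by
    rw [norm_smul, norm_inv, norm_pow, norm_norm]
    field_simp
  refine ⟨(‖P‖ ^ 2)⁻¹ • P, ?_, ?_, ?_, fun w hw ↦ ?_⟩
  · rw [inner_smul_right, hζP, mul_zero]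
  · rw [hT2]
    exact (one_le_inv₀ hP_pos).2 (by linarith)
  · rw [hT2]
    exact inv_lt_of_inv_lt₀ two_pos (by linarith)
  · rw [hT2, real_inner_smul_left, hPw w hw]

lemma add_mem_lightSlice (hT : T ≠ 0) (hζT : ⟪ζ, T⟫_ℝ = 0)
    (hTe : ∀ w, ⟪ζ, w⟫_ℝ = 0 → ⟪T, w⟫_ℝ = ‖T‖ ^ 2 * ⟪e, w⟫_ℝ) {q : E} (hζq : ⟪ζ, q⟫_ℝ = 0)
    (hTq : ⟪T, q⟫_ℝ = 0) (hq : ‖q‖ ^ 2 = 2 - ‖T‖ ^ 2) : T + q ∈ lightSlice e ζ := by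
  have hζw : ⟪ζ, T + q⟫_ℝ = 0 := by rw [inner_add_right, hζT, hζq, add_zero]
  refine ⟨?_, ?_, hζw⟩
  · have hTw := hTe _ hζw
    rw [inner_add_right, hTq, real_inner_self_eq_norm_sq, add_zero] at hTw
    exact (mul_eq_left₀ (by simpa using hT)).1 hTw.symm
  · rw [norm_add_sq_real, hTq, hq]
    ring

lemma inner_eq_zero_and_norm_sq_of_mem_lightSlice (hζT : ⟪ζ, T⟫_ℝ = 0)
    (hTe : ∀ w, ⟪ζ, w⟫_ℝ = 0 → ⟪T, w⟫_ℝ = ‖T‖ ^ 2 * ⟪e, w⟫_ℝ) {w : E} (hw : w ∈ lightSlice e ζ) :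
    ⟪ζ, w - T⟫_ℝ = 0 ∧ ⟪T, w - T⟫_ℝ = 0 ∧ ‖w - T‖ ^ 2 = 2 - ‖T‖ ^ 2 := by
  obtain ⟨hew, hw2, hζw⟩ := hw
  have hTw : ⟪T, w⟫_ℝ = ‖T‖ ^ 2 := by rw [hTe w hζw, hew, mul_one]
  refine ⟨?_, ?_, ?_⟩
  · rw [inner_sub_right, hζw, hζT, sub_zero]
  · rw [inner_sub_right, hTw, real_inner_self_eq_norm_sq, sub_self]
  · rw [norm_sub_sq_real, hw2, real_inner_comm, hTw]
    ring

lemma mem_orthogonal_span_pair {x y q : E} :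
    q ∈ (Submodule.span ℝ {x, y})ᗮ ↔ ⟪x, q⟫_ℝ = 0 ∧ ⟪y, q⟫_ℝ = 0 := by
  rw [Submodule.span_insert, ← Submodule.inf_orthogonal, Submodule.mem_inf,
    Submodule.mem_orthogonal_singleton_iff_inner_right,
    Submodule.mem_orthogonal_singleton_iff_inner_right]

lemma one_lt_rank_orthogonal_span_pair [FiniteDimensional ℝ E] (hE : 4 ≤ finrank ℝ E) (x y : E) :
    1 < Module.rank ℝ (Submodule.span ℝ {x, y})ᗮ := by
  classical
  have hspan : finrank ℝ (Submodule.span ℝ {x, y}) ≤ 2 := by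
    have hle := (finrank_span_finset_le_card (R := ℝ) {x, y}).trans Finset.card_le_two
    rwa [Finset.coe_pair] at hle
  have hadd := (Submodule.span ℝ {x, y}).finrank_add_finrank_orthogonal
  rw [← finrank_eq_rank]
  exact_mod_cast (by lia : 1 < finrank ℝ (Submodule.span ℝ {x, y})ᗮ)

variable {G : Type*} [NormedAddCommGroup G] [NormedSpace ℝ G] {B : E →ₗ[ℝ] E →ₗ[ℝ] G}

lemma apply_eq_zero_and_smul_apply_self_of_lightSlice [FiniteDimensional ℝ E]
    (hE : 4 ≤ finrank ℝ E) (hT : T ≠ 0) (hT_lt : ‖T‖ ^ 2 < 2) (hζT : ⟪ζ, T⟫_ℝ = 0)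
    (hTe : ∀ w, ⟪ζ, w⟫_ℝ = 0 → ⟪T, w⟫_ℝ = ‖T‖ ^ 2 * ⟪e, w⟫_ℝ) (hsymm : ∀ x y, B x y = B y x)
    {v : E} (hv : v ∈ lightSlice e ζ) (hB : ∀ᶠ w in 𝓝[lightSlice e ζ] v, B w w = 0)
    {q : E} (hζq : ⟪ζ, q⟫_ℝ = 0) (hTq : ⟪T, q⟫_ℝ = 0) :
    B T q = 0 ∧ (2 - ‖T‖ ^ 2) • B q q = -(‖q‖ ^ 2 • B T T) := by
  set r := √(2 - ‖T‖ ^ 2) with hr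
  have hr2 : r ^ 2 = 2 - ‖T‖ ^ 2 := sq_sqrt (by linarith)
  have hr_pos : 0 < r := sqrt_pos.2 (by linarith)
  set W := (Submodule.span ℝ {ζ, T})ᗮ
  obtain ⟨hζp, hTp, hp2⟩ := inner_eq_zero_and_norm_sq_of_mem_lightSlice hζT hTe hv
  let p : W := ⟨v - T, mem_orthogonal_span_pair.2 ⟨hζp, hTp⟩⟩
  have hp : ‖p‖ = r := by rw [hr, ← hp2, sqrt_sq (norm_nonneg _), Submodule.coe_norm]
  have htendsto : Tendsto (fun q : W ↦ T + (q : E)) (𝓝[sphere 0 r] p) (𝓝[lightSlice e ζ] v) := by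
    refine tendsto_nhdsWithin_iff.2 ⟨?_, ?_⟩
    · have hcont : Continuous fun q : W ↦ T + (q : E) := by fun_prop
      exact (hcont.tendsto' p v (add_sub_cancel T v)).mono_left nhdsWithin_le_nhds
    · filter_upwards [self_mem_nhdsWithin] with q hq
      obtain ⟨hζq, hTq⟩ := mem_orthogonal_span_pair.1 q.2
      exact add_mem_lightSlice hT hζT hTe hζq hTq
        (by rw [← hr2, ← mem_sphere_zero_iff_norm.1 hq, Submodule.coe_norm])
  have hsphere := forall_norm_eq_apply_add_self_eq_zero
    (one_lt_rank_orthogonal_span_pair hE ζ T) hp (htendsto.eventually hB)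
  rw [← hr2]
  exact apply_eq_zero_and_smul_apply_self_of_sphere hr_pos hsymm hsphere
    ⟨q, mem_orthogonal_span_pair.2 ⟨hζq, hTq⟩⟩

theorem eq_zero_of_eventually_lightSlice {ι : Type*} [Fintype ι] (b : OrthonormalBasis ι ℝ E)
    (hι : 4 ≤ Fintype.card ι) (hsymm : ∀ x y, B x y = B y x) (hBζ : B ζ = 0)
    (htrace : ∑ i, B (b i) (b i) = 0) (he : ‖e‖ = 1) (hζ : 2 * ⟪ζ, e⟫_ℝ ^ 2 < ‖ζ‖ ^ 2)
    {v : E} (hv : v ∈ lightSlice e ζ) (hB : ∀ᶠ w in 𝓝[lightSlice e ζ] v, B w w = 0) : B = 0 := by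
  have : FiniteDimensional ℝ E := b.toBasis.finiteDimensional_of_finite
  have hE : 4 ≤ finrank ℝ E := by rwa [finrank_eq_card_basis b.toBasis]
  obtain ⟨T, hζT, hT_ge, hT_lt, hTe⟩ := exists_lightSlice_center he hζ
  have hT0 : T ≠ 0 := by
    rintro rfl
    norm_num at hT_ge
  have hζ0 : ζ ≠ 0 := by
    rintro rfl
    simp at hζ
  have hcard : 2 - ‖T‖ ^ 2 ≠ (Fintype.card ι - 2) * ‖T‖ ^ 2 := by
    have : (4 : ℝ) ≤ Fintype.card ι := by exact_mod_cast hι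
    nlinarith
  exact eq_zero_of_trace_eq_zero b hζ0 hT0 hζT (by linarith) hcard hsymm hBζ htrace fun q hζq hTq ↦
    apply_eq_zero_and_smul_apply_self_of_lightSlice hE hT0 hT_lt hζT hTe hsymm hv hB hζq hTq

end LightSlice

section NullDirections

variable {H : Type*} [NormedAddCommGroup H] [InnerProductSpace ℝ H]

lemma exists_orthogonal_unit_inner_pos {θ ξ : H} (hθ : ‖θ‖ = 1) (hξ : |⟪ξ, θ⟫_ℝ| < ‖ξ‖) :
    ∃ ω : H, ‖ω‖ = 1 ∧ ⟪θ, ω⟫_ℝ = 0 ∧ 0 < ⟪ξ, ω⟫_ℝ := by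
  obtain ⟨P, hθP, hPw, hP2⟩ := exists_orthogonal_component (norm_ne_zero_iff.1 (hθ ▸ one_ne_zero)) ξ
  have hP_pos : 0 < ‖P‖ ^ 2 := by
    rw [hP2, hθ, one_pow, div_one, sub_pos, real_inner_comm, sq_lt_sq, abs_norm]
    exact hξ
  have hP0 : P ≠ 0 := norm_ne_zero_iff.1 (pow_ne_zero_iff two_ne_zero |>.1 hP_pos.ne')
  refine ⟨‖P‖⁻¹ • P, norm_smul_inv_norm hP0, ?_, ?_⟩
  · rw [inner_smul_right, hθP, mul_zero]
  · rw [inner_smul_right, ← hPw P hθP, real_inner_self_eq_norm_sq]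
    positivity

lemma hasDerivAt_inner_greatCircle (ξ x u : H) :
    HasDerivAt (fun s ↦ ⟪ξ, greatCircle x u s⟫_ℝ) ⟪ξ, u⟫_ℝ 0 := by
  have hcurve : HasDerivAt (greatCircle x u) (-sin 0 • x + cos 0 • u) 0 :=
    ((hasDerivAt_cos 0).smul_const x).add ((hasDerivAt_sin 0).smul_const u)
  simpa using (hasDerivAt_const 0 ξ).inner ℝ hcurve

theorem eventually_exists_add_inner_eq_zero {θ₀ ξ₀ : H} {τ₀ : ℝ} (hθ₀ : ‖θ₀‖ = 1)
    (hnull : τ₀ + ⟪ξ₀, θ₀⟫_ℝ = 0) (hspace : |τ₀| < ‖ξ₀‖) {p : H → Prop}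
    (hp : ∀ᶠ θ in 𝓝 θ₀, p θ) :
    ∀ᶠ ζ : ℝ × H in 𝓝 (τ₀, ξ₀), ∃ θ, ‖θ‖ = 1 ∧ p θ ∧ ζ.1 + ⟪ζ.2, θ⟫_ℝ = 0 := by
  obtain ⟨ω, hω, hθω, hξω⟩ := exists_orthogonal_unit_inner_pos hθ₀
    (by rwa [← abs_neg, ← eq_neg_of_add_eq_zero_left hnull])
  have hp_curve : ∀ᶠ s in 𝓝 (0 : ℝ), p (greatCircle θ₀ ω s) :=
    ((continuous_greatCircle θ₀ ω).tendsto' 0 θ₀ (greatCircle_zero θ₀ ω)).eventually hp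
  have hderiv := (hasDerivAt_inner_greatCircle ξ₀ θ₀ ω).const_add τ₀
  have hsign : ∀ᶠ s in 𝓝 (0 : ℝ),
      SignType.sign (τ₀ + ⟪ξ₀, greatCircle θ₀ ω s⟫_ℝ) = SignType.sign (s - 0) :=
    eventually_nhdsWithin_sign_eq_of_deriv_pos (by rwa [hderiv.deriv]) (by simpa using hnull)
  obtain ⟨δ, hδ, hball⟩ := nhds_basis_closedBall.eventually_iff.1 (hp_curve.and hsign)
  rw [closedBall_eq_Icc, zero_sub, zero_add] at hball
  have hpos : 0 < τ₀ + ⟪ξ₀, greatCircle θ₀ ω δ⟫_ℝ := by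
    rw [← sign_eq_one_iff, (hball ⟨by linarith, le_rfl⟩).2, sub_zero, sign_pos hδ]
  have hneg : τ₀ + ⟪ξ₀, greatCircle θ₀ ω (-δ)⟫_ℝ < 0 := by
    rw [← sign_eq_neg_one_iff, (hball ⟨le_rfl, by linarith⟩).2, sub_zero, sign_neg (by linarith)]
  have hcont (s : ℝ) : Continuous fun ζ : ℝ × H ↦ ζ.1 + ⟪ζ.2, greatCircle θ₀ ω s⟫_ℝ := by fun_prop
  filter_upwards [(hcont δ).continuousAt.eventually_const_lt hpos,
    (hcont (-δ)).continuousAt.eventually_lt_const hneg] with ζ hζpos hζneg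
  obtain ⟨s, hs, hζs⟩ := intermediate_value_Icc (by linarith : -δ ≤ δ)
    (f := fun s ↦ ζ.1 + ⟪ζ.2, greatCircle θ₀ ω s⟫_ℝ) (by fun_prop) ⟨hζneg.le, hζpos.le⟩
  exact ⟨greatCircle θ₀ ω s, (norm_greatCircle (hω.trans hθ₀.symm) hθω s).trans hθ₀,
    (hball hs).1, hζs⟩

end NullDirections

section Cone

lemma smul_mem_interior_of_forall_smul_mem {V : Type*} [AddCommGroup V] [Module ℝ V]
    [TopologicalSpace V] [ContinuousConstSMul ℝ V] {S : Set V}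
    (hS : ∀ x ∈ S, ∀ c : ℝ, 0 < c → c • x ∈ S) {x : V} (hx : x ∈ interior S) {c : ℝ} (hc : 0 < c) :
    c • x ∈ interior S := by
  have hsub : c • S ⊆ S := by
    rintro _ ⟨y, hy, rfl⟩
    exact hS y hy c hc
  refine interior_mono hsub ?_
  rw [interior_smul₀ hc.ne']
  exact Set.smul_mem_smul_set hx

end Cone

section Fourier

open MeasureTheory

variable {ι : Type*} [Fintype ι] {f : (ι → ℝ) → ℂ}

/-- The plane wave `z ↦ e^{−i z·ζ}`, the kernel of the Fourier transform at frequency `ζ`. -/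
noncomputable def planeWave (ζ z : ι → ℝ) : ℂ :=
  Complex.exp (-Complex.I * ∑ k, (z k : ℂ) * (ζ k : ℂ))

@[fun_prop]
lemma continuous_planeWave (ζ : ι → ℝ) : Continuous (planeWave ζ) := by
  unfold planeWave
  fun_prop

lemma hasFDerivAt_planeWave (ζ z : ι → ℝ) :
    HasFDerivAt (planeWave ζ) (planeWave ζ z • -Complex.I •
      ∑ k, (ContinuousLinearMap.proj k).smulRight (ζ k : ℂ) : (ι → ℝ) →L[ℝ] ℂ) z := by
  have hterm (k : ι) : HasFDerivAt (fun z : ι → ℝ ↦ (z k : ℂ) * (ζ k : ℂ))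
      ((ContinuousLinearMap.proj k : (ι → ℝ) →L[ℝ] ℝ).smulRight (ζ k : ℂ)) z :=
    (ContinuousLinearMap.hasFDerivAt _).congr_of_eventuallyEq (.of_forall fun z ↦ by simp)
  exact ((HasFDerivAt.fun_sum fun k _ ↦ hterm k).const_mul (-Complex.I)).cexp

lemma fderiv_planeWave_apply (ζ z v : ι → ℝ) :
    fderiv ℝ (planeWave ζ) z v = -Complex.I * (∑ k, (v k : ℂ) * (ζ k : ℂ)) * planeWave ζ z := by
  rw [(hasFDerivAt_planeWave ζ z).fderiv]
  simp only [smul_apply, sum_apply, ContinuousLinearMap.smulRight_apply,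
    ContinuousLinearMap.proj_apply, Complex.real_smul, smul_eq_mul]
  ring

lemma integrable_mul_planeWave (hf : Continuous f) (hsupp : HasCompactSupport f) (ζ : ι → ℝ) :
    Integrable fun z ↦ f z * planeWave ζ z :=
  (hf.mul (continuous_planeWave ζ)).integrable_of_hasCompactSupport hsupp.mul_right

lemma integrable_fderiv_mul_planeWave (hf : ContDiff ℝ 1 f) (hsupp : HasCompactSupport f)
    (ζ v : ι → ℝ) : Integrable fun z ↦ fderiv ℝ f z v * planeWave ζ z :=
  integrable_mul_planeWave ((hf.continuous_fderiv one_ne_zero).clm_apply continuous_const)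
    (hsupp.fderiv_apply ℝ v) ζ

lemma integral_fderiv_mul_planeWave (hf : ContDiff ℝ 1 f) (hsupp : HasCompactSupport f)
    (ζ v : ι → ℝ) :
    ∫ z, fderiv ℝ f z v * planeWave ζ z =
      Complex.I * (∑ k, (v k : ℂ) * (ζ k : ℂ)) * ∫ z, f z * planeWave ζ z := by
  have hfg := integrable_mul_planeWave hf.continuous hsupp ζ
  have hmul (z : ι → ℝ) : f z * fderiv ℝ (planeWave ζ) z v =
      -Complex.I * (∑ k, (v k : ℂ) * (ζ k : ℂ)) * (f z * planeWave ζ z) := by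
    rw [fderiv_planeWave_apply]
    ring
  have hparts := integral_mul_fderiv_eq_neg_fderiv_mul_of_integrable
    (integrable_fderiv_mul_planeWave hf hsupp ζ v) (by simpa only [hmul] using hfg.const_mul _) hfg
    (fun z _ ↦ hf.differentiable one_ne_zero z)
    (fun z _ ↦ (hasFDerivAt_planeWave ζ z).differentiableAt)
  simp only [hmul, integral_const_mul] at hparts
  linear_combination hparts

end Fourier

section TensorField

open MeasureTheory

variable {n : ℕ} {F : Fin (n + 1) → Fin (n + 1) → (Fin (n + 1) → ℝ) → ℂ}

lemma fourierComp_eq_integral_mul_planeWave (i j : Fin (n + 1)) (ζ : Fin (n + 1) → ℝ) :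
    fourierComp n F i j ζ = ∫ z, F i j z * planeWave ζ z :=
  rfl

lemma sum_mul_fourierComp_eq_zero (hF : ∀ i j, ContDiff ℝ 1 (F i j))
    (hsupp : ∀ i j, HasCompactSupport (F i j))
    (hdiv : ∀ j z, ∑ i, fderiv ℝ (F i j) z (Pi.single i 1) = 0) (ζ : Fin (n + 1) → ℝ)
    (j : Fin (n + 1)) : ∑ i, (ζ i : ℂ) * fourierComp n F i j ζ = 0 := by
  have hderiv (i : Fin (n + 1)) : Complex.I * ((ζ i : ℂ) * fourierComp n F i j ζ) =
      ∫ z, fderiv ℝ (F i j) z (Pi.single i 1) * planeWave ζ z := by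
    rw [integral_fderiv_mul_planeWave (hF i j) (hsupp i j), ← mul_assoc,
      fourierComp_eq_integral_mul_planeWave]
    simp [Pi.single_apply, apply_ite]
  have hI : Complex.I * ∑ i, (ζ i : ℂ) * fourierComp n F i j ζ = 0 := by
    simp_rw [Finset.mul_sum, hderiv]
    rw [← integral_finsetSum _ fun i _ ↦ integrable_fderiv_mul_planeWave (hF i j) (hsupp i j) _ _]
    simp_rw [← Finset.sum_mul, hdiv, zero_mul, integral_zero]
  exact (mul_eq_zero.1 hI).resolve_left Complex.I_ne_zero

lemma sum_fourierComp_self_eq_zero (hF : ∀ i, Continuous (F i i))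
    (hsupp : ∀ i, HasCompactSupport (F i i)) (htrace : ∀ z, ∑ i, F i i z = 0)
    (ζ : Fin (n + 1) → ℝ) : ∑ i, fourierComp n F i i ζ = 0 := by
  simp_rw [fourierComp_eq_integral_mul_planeWave]
  rw [← integral_finsetSum _ fun i _ ↦ integrable_mul_planeWave (hF i) (hsupp i) ζ]
  simp_rw [← Finset.sum_mul, htrace, zero_mul, integral_zero]

end TensorField

section Coordinates

variable {n : ℕ} {ζ ζ₀ : Fin (n + 1) → ℝ} {θ θ₀ : Fin n → ℝ}

lemma inner_toLp_toLp {ι : Type*} [Fintype ι] (x y : ι → ℝ) :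
    ⟪WithLp.toLp 2 x, WithLp.toLp 2 y⟫_ℝ = ∑ i, x i * y i := by
  simp [PiLp.inner_apply, mul_comm]

lemma toLp_mem_lightSlice_iff {w : Fin (n + 1) → ℝ} :
    WithLp.toLp 2 w ∈ lightSlice (EuclideanSpace.single 0 1) (WithLp.toLp 2 ζ) ↔
      w = lightDir n (Fin.tail w) ∧ ∑ i, Fin.tail w i ^ 2 = 1 ∧ ∑ k, ζ k * w k = 0 := by
  have hcons : w = lightDir n (Fin.tail w) ↔ w 0 = 1 := by
    rw [lightDir, ← Fin.cons_self_tail w, Fin.cons_inj, Fin.tail_cons, Fin.cons_zero]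
    simp
  rw [hcons, lightSlice, Set.mem_ofPred_eq, EuclideanSpace.inner_single_left,
    EuclideanSpace.real_norm_sq_eq, inner_toLp_toLp, map_one, one_mul, Fin.sum_univ_succ]
  refine and_congr_right fun hw ↦ and_congr_left' ?_
  rw [hw, one_pow, ← eq_sub_iff_add_eq', show (2 : ℝ) - 1 = 1 by norm_num]
  rfl

lemma toLp_lightDir_mem_lightSlice (hθ : ∑ i, θ i ^ 2 = 1) (hζθ : ∑ k, ζ k * lightDir n θ k = 0) :
    WithLp.toLp 2 (lightDir n θ) ∈ lightSlice (EuclideanSpace.single 0 1) (WithLp.toLp 2 ζ) :=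
  toLp_mem_lightSlice_iff.2 ⟨rfl, hθ, hζθ⟩

lemma eventually_nhdsWithin_lightSlice {p : (Fin (n + 1) → ℝ) → Prop}
    (hp : ∀ᶠ θ' in 𝓝 θ, ∑ i, θ' i ^ 2 = 1 → ∑ k, ζ k * lightDir n θ' k = 0 → p (lightDir n θ')) :
    ∀ᶠ w in 𝓝[lightSlice (EuclideanSpace.single 0 1) (WithLp.toLp 2 ζ)]
      WithLp.toLp 2 (lightDir n θ), p w.ofLp := by
  have htail : Continuous fun w : EuclideanSpace ℝ (Fin (n + 1)) ↦ Fin.tail w.ofLp := by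
    unfold Fin.tail
    fun_prop
  filter_upwards [nhdsWithin_le_nhds ((htail.tendsto' _ θ rfl).eventually hp),
    self_mem_nhdsWithin] with w hw hmem
  obtain ⟨hcons, hunit, hζw⟩ := toLp_mem_lightSlice_iff.1 hmem
  rw [← hcons] at hw
  exact hw hunit hζw

lemma toLinearMap₂_basisFun_apply {ι : Type*} [Fintype ι] [DecidableEq ι] (A : Matrix ι ι ℂ)
    (x y : EuclideanSpace ℝ ι) :
    Matrix.toLinearMap₂ (EuclideanSpace.basisFun ι ℝ).toBasis (EuclideanSpace.basisFun ι ℝ).toBasis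
      A x y = ∑ i, ∑ j, (x i : ℂ) * (y j : ℂ) * A i j := by
  simp [Matrix.toLinearMap₂_apply, mul_assoc]

theorem eq_zero_of_eventually_lightDir (hn : 3 ≤ n) {A : Matrix (Fin (n + 1)) (Fin (n + 1)) ℂ}
    (hsymm : A.IsSymm) (hdiv : ∀ j, ∑ i, (ζ i : ℂ) * A i j = 0) (htrace : A.trace = 0)
    (hspace : ζ 0 ^ 2 < ∑ i : Fin n, ζ i.succ ^ 2) (hθ : ∑ i, θ i ^ 2 = 1)
    (hζθ : ∑ k, ζ k * lightDir n θ k = 0)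
    (hA : ∀ᶠ θ' in 𝓝 θ, ∑ i, θ' i ^ 2 = 1 → ∑ k, ζ k * lightDir n θ' k = 0 →
      ∑ i, ∑ j, (lightDir n θ' i : ℂ) * (lightDir n θ' j : ℂ) * A i j = 0) : A = 0 := by
  let b := EuclideanSpace.basisFun (Fin (n + 1)) ℝ
  refine (Matrix.toLinearMap₂ b.toBasis b.toBasis).map_eq_zero_iff.1 ?_
  refine eq_zero_of_eventually_lightSlice (e := EuclideanSpace.single 0 1) (ζ := WithLp.toLp 2 ζ) b
    (by simpa using hn) (fun x y ↦ ?_) ?_ ?_ (by simp) ?_ (toLp_lightDir_mem_lightSlice hθ hζθ) ?_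
  · rw [toLinearMap₂_basisFun_apply, toLinearMap₂_basisFun_apply, Finset.sum_comm]
    simp_rw [hsymm.apply, mul_comm (x _ : ℂ)]
  · ext y
    rw [toLinearMap₂_basisFun_apply, Finset.sum_comm]
    simp_rw [mul_right_comm _ _ (A _ _), ← Finset.sum_mul, hdiv]
    simp
  · simp_rw [← b.coe_toBasis, Matrix.toLinearMap₂_apply_basis]
    exact htrace
  · rw [EuclideanSpace.inner_single_right, EuclideanSpace.real_norm_sq_eq, Fin.sum_univ_succ]
    simp only [one_mul, conj_trivial]
    linarith
  · filter_upwards [eventually_nhdsWithin_lightSlice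
      (p := fun w ↦ ∑ i, ∑ j, (w i : ℂ) * (w j : ℂ) * A i j = 0) hA] with w hw
    rwa [toLinearMap₂_basisFun_apply]

lemma sum_mul_lightDir (ζ : Fin (n + 1) → ℝ) (θ : Fin n → ℝ) :
    ∑ k, ζ k * lightDir n θ k = ζ 0 + ∑ i : Fin n, ζ i.succ * θ i := by
  simp [Fin.sum_univ_succ, lightDir]

theorem eventually_exists_sum_mul_lightDir_eq_zero (hθ₀ : ∑ i, θ₀ i ^ 2 = 1)
    (hnull : ∑ k, ζ₀ k * lightDir n θ₀ k = 0) (hspace : ζ₀ 0 ^ 2 < ∑ i : Fin n, ζ₀ i.succ ^ 2)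
    {p : (Fin n → ℝ) → Prop} (hp : ∀ᶠ θ in 𝓝 θ₀, p θ) :
    ∀ᶠ ζ in 𝓝 ζ₀, ∃ θ, ∑ i, θ i ^ 2 = 1 ∧ p θ ∧ ∑ k, ζ k * lightDir n θ k = 0 := by
  let split (ζ : Fin (n + 1) → ℝ) : ℝ × EuclideanSpace ℝ (Fin n) :=
    (ζ 0, WithLp.toLp 2 fun i ↦ ζ i.succ)
  have hsplit : Continuous split := by fun_prop
  have hnorm (θ : EuclideanSpace ℝ (Fin n)) : ‖θ‖ = 1 ↔ ∑ i, θ i ^ 2 = 1 := by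
    rw [← EuclideanSpace.real_norm_sq_eq, pow_eq_one_iff_of_nonneg (norm_nonneg θ) two_ne_zero]
  have hp' : ∀ᶠ θ in 𝓝 (WithLp.toLp 2 θ₀), p (WithLp.ofLp θ) :=
    (PiLp.continuous_ofLp 2 _).continuousAt.eventually hp
  have hexists := eventually_exists_add_inner_eq_zero (τ₀ := ζ₀ 0)
    (ξ₀ := WithLp.toLp 2 fun i ↦ ζ₀ i.succ) ((hnorm _).2 hθ₀)
    (by rw [inner_toLp_toLp, ← sum_mul_lightDir, hnull])
    (abs_lt_of_sq_lt_sq (by simpa only [EuclideanSpace.real_norm_sq_eq] using hspace)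
      (norm_nonneg _)) hp'
  filter_upwards [hsplit.continuousAt.eventually hexists] with ζ ⟨θ, hθ, hpθ, hζθ⟩
  exact ⟨θ.ofLp, (hnorm θ).1 hθ, hpθ, by rw [sum_mul_lightDir, ← inner_toLp_toLp, hζθ]⟩

end Coordinates

section FourierSlices

variable {n : ℕ} {F : Fin (n + 1) → Fin (n + 1) → (Fin (n + 1) → ℝ) → ℂ}

/-- The quadratic form of `F̂(ζ)` vanishes at the light direction `θ̃`, for every `ζ ⊥ θ̃`. By the
Fourier slice theorem this says that the light ray transform of `F` vanishes in the direction
`θ̃`. -/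
def VanishingSlice (F : Fin (n + 1) → Fin (n + 1) → (Fin (n + 1) → ℝ) → ℂ) (θ : Fin n → ℝ) :
    Prop :=
  ∀ ζ : Fin (n + 1) → ℝ, ∑ k, ζ k * lightDir n θ k = 0 →
    ∑ i, ∑ j, (lightDir n θ i : ℂ) * (lightDir n θ j : ℂ) * fourierComp n F i j ζ = 0

/-- The cone of space-like covectors `ζ` orthogonal to some light direction `θ̃`, `θ ∈ Sⁿ⁻¹`, such
that the slices of `F` vanish at all points of `Sⁿ⁻¹` near `θ`. -/
def vanishingSliceCone (F : Fin (n + 1) → Fin (n + 1) → (Fin (n + 1) → ℝ) → ℂ) :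
    Set (Fin (n + 1) → ℝ) :=
  {ζ | ζ 0 ^ 2 < ∑ i : Fin n, ζ i.succ ^ 2 ∧ ∃ θ, ∑ i, θ i ^ 2 = 1 ∧
    (∀ᶠ θ' in 𝓝 θ, ∑ i, θ' i ^ 2 = 1 → VanishingSlice F θ') ∧ ∑ k, ζ k * lightDir n θ k = 0}

lemma smul_mem_vanishingSliceCone {ζ : Fin (n + 1) → ℝ} (hζ : ζ ∈ vanishingSliceCone F) {c : ℝ}
    (hc : 0 < c) : c • ζ ∈ vanishingSliceCone F := by
  obtain ⟨hspace, θ, hθ, hslice, hζθ⟩ := hζ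
  refine ⟨?_, θ, hθ, hslice, ?_⟩
  · simp_rw [Pi.smul_apply, smul_eq_mul, mul_pow, ← Finset.mul_sum]
    gcongr
  · simp_rw [Pi.smul_apply, smul_eq_mul, mul_assoc, ← Finset.mul_sum, hζθ, mul_zero]

lemma vanishingSliceCone_mem_nhds {θ₀ : Fin n → ℝ} (hθ₀ : ∑ i, θ₀ i ^ 2 = 1)
    (hslice : ∀ᶠ θ in 𝓝 θ₀, ∑ i, θ i ^ 2 = 1 → VanishingSlice F θ) {ζ₀ : Fin (n + 1) → ℝ}
    (hspace : ζ₀ 0 ^ 2 < ∑ i : Fin n, ζ₀ i.succ ^ 2) (hnull : ∑ k, ζ₀ k * lightDir n θ₀ k = 0) :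
    vanishingSliceCone F ∈ 𝓝 ζ₀ := by
  have hopen : IsOpen {ζ : Fin (n + 1) → ℝ | ζ 0 ^ 2 < ∑ i : Fin n, ζ i.succ ^ 2} :=
    isOpen_lt (by fun_prop) (by fun_prop)
  filter_upwards [hopen.mem_nhds hspace, eventually_exists_sum_mul_lightDir_eq_zero hθ₀ hnull
    hspace (eventually_eventually_nhds.2 hslice)] with ζ hζ hexists using ⟨hζ, hexists⟩

lemma fourierComp_eq_zero_of_mem_vanishingSliceCone (hn : 3 ≤ n) (hsymm : ∀ i j, F i j = F j i)
    (hF : ∀ i j, ContDiff ℝ 1 (F i j)) (hsupp : ∀ i j, HasCompactSupport (F i j))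
    (hdiv : ∀ j z, ∑ i, fderiv ℝ (F i j) z (Pi.single i 1) = 0)
    (htrace : ∀ z, ∑ i, F i i z = 0) {ζ : Fin (n + 1) → ℝ} (hζ : ζ ∈ vanishingSliceCone F)
    (i j : Fin (n + 1)) : fourierComp n F i j ζ = 0 := by
  obtain ⟨hspace, θ, hθ, hslice, hζθ⟩ := hζ
  let A : Matrix (Fin (n + 1)) (Fin (n + 1)) ℂ := .of fun i j ↦ fourierComp n F i j ζ
  have hA : A = 0 := eq_zero_of_eventually_lightDir hn
    (.ext fun i j ↦ by simp [A, fourierComp, hsymm i j])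
    (sum_mul_fourierComp_eq_zero hF hsupp hdiv ζ)
    (sum_fourierComp_self_eq_zero (fun i ↦ (hF i i).continuous) (fun i ↦ hsupp i i) htrace ζ)
    hspace hθ hζθ (hslice.mono fun θ' hslice_θ' hθ' hζθ' ↦ hslice_θ' hθ' ζ hζθ')
  exact congrFun₂ hA i j

end FourierSlices

theorem stmt_4_general {n : ℕ} (hn : 3 ≤ n)
    {F : Fin (n + 1) → Fin (n + 1) → (Fin (n + 1) → ℝ) → ℂ} (hsymm : ∀ i j, F i j = F j i)
    (hF : ∀ i j, ContDiff ℝ 1 (F i j)) (hsupp : ∀ i j, HasCompactSupport (F i j))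
    (hdiv : ∀ j z, ∑ i, fderiv ℝ (F i j) z (Pi.single i 1) = 0)
    (htrace : ∀ z, ∑ i, F i i z = 0) {θ₀ : Fin n → ℝ} (hθ₀ : ∑ i, θ₀ i ^ 2 = 1)
    (hslice : ∀ᶠ θ in 𝓝 θ₀, ∑ i, θ i ^ 2 = 1 → VanishingSlice F θ) {ζ₀ : Fin (n + 1) → ℝ}
    (hspace : ζ₀ 0 ^ 2 < ∑ i : Fin n, ζ₀ i.succ ^ 2) (hnull : ∑ k, ζ₀ k * lightDir n θ₀ k = 0) :
    ∃ C : Set (Fin (n + 1) → ℝ), IsOpen C ∧ (∀ ζ ∈ C, ∀ c : ℝ, 0 < c → c • ζ ∈ C) ∧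
      ζ₀ ∈ C ∧ ∀ ζ ∈ C, ∀ i j, fourierComp n F i j ζ = 0 :=
  ⟨interior (vanishingSliceCone F), isOpen_interior,
    fun _ hζ _ hc ↦ smul_mem_interior_of_forall_smul_mem
      (fun _ hζ _ hc ↦ smul_mem_vanishingSliceCone hζ hc) hζ hc,
    mem_interior_iff_mem_nhds.2 (vanishingSliceCone_mem_nhds hθ₀ hslice hspace hnull),
    fun _ hζ ↦ fourierComp_eq_zero_of_mem_vanishingSliceCone hn hsymm hF hsupp hdiv htrace
      (interior_subset hζ)⟩

/-- Main lemma: if `F` is a smooth compactly supported divergence-free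
trace-free symmetric 2-tensor field on `ℝ^{1+n}` (`n ≥ 3`) and
`Σᵢⱼ θ̃ⁱ θ̃ʲ F̂ᵢⱼ(ζ) = 0` for all `θ` near `θ₀ = (1,0,…,0)` and all
`ζ ⊥ (1,θ)`, then `F̂ᵢⱼ` vanishes on an open cone containing the space-like
vector `ζ₀ = (0,0,1,0,…,0)`. -/
theorem stmt_4 (n : ℕ) (hn : 3 ≤ n)
    (F : Fin (n + 1) → Fin (n + 1) → (Fin (n + 1) → ℝ) → ℂ)
    (hsym : ∀ i j, F i j = F j i)
    (hsmooth : ∀ i j, ContDiff ℝ (⊤ : ℕ∞) (F i j))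
    (hsupp : ∀ i j, HasCompactSupport (F i j))
    (hdiv : ∀ (j : Fin (n + 1)) (z : Fin (n + 1) → ℝ),
      ∑ i, fderiv ℝ (F i j) z (Pi.single i 1) = 0)
    (htrace : ∀ z : Fin (n + 1) → ℝ, ∑ i, F i i z = 0)
    (ε : ℝ) (hε : 0 < ε)
    (hslice : ∀ θ : Fin n → ℝ, ∑ i, θ i ^ 2 = 1 →
      ‖θ - (fun i : Fin n => if (i : ℕ) = 0 then 1 else 0)‖ < ε →
      ∀ ζ : Fin (n + 1) → ℝ, ∑ k, ζ k * lightDir n θ k = 0 →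
        ∑ i, ∑ j, ((lightDir n θ i : ℝ) : ℂ) * ((lightDir n θ j : ℝ) : ℂ) *
          fourierComp n F i j ζ = 0) :
    ∃ C : Set (Fin (n + 1) → ℝ), IsOpen C ∧
      (∀ ζ ∈ C, ∀ c : ℝ, 0 < c → c • ζ ∈ C) ∧
      (fun i : Fin (n + 1) => if (i : ℕ) = 2 then (1 : ℝ) else 0) ∈ C ∧
      ∀ ζ ∈ C, ∀ i j : Fin (n + 1), fourierComp n F i j ζ = 0 := by
  obtain ⟨m, rfl⟩ := Nat.exists_eq_add_of_le' hn
  refine stmt_4_general hn hsym (fun i j ↦ (hsmooth i j).of_le (by simp)) hsupp hdiv htrace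
    (θ₀ := fun i ↦ if (i : ℕ) = 0 then 1 else 0) ?_ ?_ ?_ ?_
  · simp
  · exact eventually_nhds_iff.2 ⟨ε, hε, fun θ hθε hθ ↦ hslice θ hθ (by rwa [← dist_eq_norm])⟩
  · rw [Fin.sum_univ_succ, Fin.sum_univ_succ]
    simp
  · simp [Fin.sum_univ_succ, lightDir]
end

section
/- Let n ≥ 4, α = 1 + 2/(n−1), β = 1 − 2/(n−1). For ξ = (ξ₀,…,ξₙ) ∈ ℝ^{1+n}, define the symmetric (n+1)×(n+1) real matrix P(ξ) by P₀₀ = |ξ|² + α ξ₀², P_{jj} = |ξ|² + β ξⱼ² for 1 ≤ j ≤ n, P₀ⱼ = Pⱼ₀ = ξ₀ξⱼ for 1 ≤ j ≤ n, and P_{jk} = β ξⱼξₖ for 1 ≤ j ≠ k ≤ n, where |ξ| is the Euclidean norm. Then for all ξ, η ∈ ℝ^{1+n}, ηᵀ P(ξ) η ≥ ((n−3)/(n−1)) |ξ|² |η|². In particular, P(ξ) is positive definite for every ξ ≠ 0. -/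
/-!
Let `J` be the diagonal matrix of Minkowski signs and `d = 1 / (n - 1)`. Then
`P(ξ) = |ξ|² I + ξ ξᵀ + d (Jξ ξᵀ + ξ (Jξ)ᵀ)`, and completing the square gives
`ηᵀ P(ξ) η = |ξ|² |η|² + (⟨ξ, η⟩ + d ⟨Jξ, η⟩)² - d² ⟨Jξ, η⟩²`.
Since `J` is an isometry, Cauchy–Schwarz bounds this below by `(1 - d²) |ξ|² |η|²`, and
`1 - d² ≥ 1 - 2 d = (n - 3) / (n - 1)`.
-/

open Matrix

section DotProduct

variable {ι R : Type*} [Fintype ι] [CommRing R] [LinearOrder R] [IsStrictOrderedRing R]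

theorem dotProduct_self_nonneg (v : ι → R) : 0 ≤ v ⬝ᵥ v :=
  Finset.sum_nonneg fun i _ ↦ mul_self_nonneg (v i)

theorem dotProduct_self_pos {v : ι → R} (hv : v ≠ 0) : 0 < v ⬝ᵥ v :=
  (dotProduct_self_nonneg v).lt_of_ne' (dotProduct_self_eq_zero.not.mpr hv)

theorem dotProduct_sq_le (u v : ι → R) : (u ⬝ᵥ v) ^ 2 ≤ (u ⬝ᵥ u) * (v ⬝ᵥ v) := by
  simpa only [dotProduct, sq] using Finset.sum_mul_sq_le_sq_mul_sq Finset.univ u v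

theorem dotProduct_mul_self_le {ε : ι → R} (hε : ∀ i, ε i ^ 2 ≤ 1) (v : ι → R) :
    (ε * v) ⬝ᵥ (ε * v) ≤ v ⬝ᵥ v := by
  refine Finset.sum_le_sum fun i _ ↦ ?_
  calc (ε * v) i * (ε * v) i = ε i ^ 2 * (v i * v i) := by rw [Pi.mul_apply]; ring
    _ ≤ v i * v i := mul_le_of_le_one_left (mul_self_nonneg _) (hε i)

end DotProduct

section SignedSymbol

variable {ι R : Type*} [DecidableEq ι]

/-- The signs of the Minkowski form on `ι → R` with time coordinate `o`: `1` in the time direction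
and `-1` in every space direction. -/
def minkowskiSign [Ring R] (o : ι) (i : ι) : R :=
  if i = o then 1 else -1

theorem minkowskiSign_sq [Ring R] (o i : ι) : (minkowskiSign o i : R) ^ 2 = 1 := by
  unfold minkowskiSign
  split_ifs <;> simp

variable [Fintype ι]

/-- The symmetric matrix `|ξ|² I + ξ ξᵀ + d (Jξ ξᵀ + ξ (Jξ)ᵀ)`, where `J` is the diagonal matrix
with entries `ε`. The matrix `P(ξ)` of the theorem is the case of Minkowski signs `ε` and
`d = 1 / (n - 1)`. -/
def signedSymbol [CommRing R] (ε : ι → R) (d : R) (ξ : ι → R) : Matrix ι ι R :=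
  (ξ ⬝ᵥ ξ) • 1 + vecMulVec ξ ξ + d • (vecMulVec (ε * ξ) ξ + vecMulVec ξ (ε * ξ))

theorem signedSymbol_minkowskiSign_apply [CommRing R] (o : ι) (d : R) (ξ : ι → R) (i j : ι) :
    signedSymbol (minkowskiSign o) d ξ i j =
      if i = j then ξ ⬝ᵥ ξ + (if i = o then 1 + 2 * d else 1 - 2 * d) * ξ i ^ 2
      else if i = o ∨ j = o then ξ i * ξ j
      else (1 - 2 * d) * ξ i * ξ j := by
  simp only [signedSymbol, minkowskiSign, Matrix.add_apply, Matrix.smul_apply, one_apply,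
    vecMulVec_apply, Pi.mul_apply, smul_eq_mul]
  grind

theorem dotProduct_signedSymbol_mulVec [CommRing R] (ε : ι → R) (d : R) (ξ η : ι → R) :
    η ⬝ᵥ signedSymbol ε d ξ *ᵥ η =
      (ξ ⬝ᵥ ξ) * (η ⬝ᵥ η) + (ξ ⬝ᵥ η + d * ((ε * ξ) ⬝ᵥ η)) ^ 2 - d ^ 2 * ((ε * ξ) ⬝ᵥ η) ^ 2 := by
  simp only [signedSymbol, add_mulVec, smul_mulVec, one_mulVec, vecMulVec_mulVec, dotProduct_add,
    dotProduct_smul, smul_eq_mul, op_smul_eq_smul, dotProduct_comm η ξ, dotProduct_comm η (ε * ξ)]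
  ring

variable [CommRing R] [LinearOrder R] [IsStrictOrderedRing R]

theorem le_dotProduct_signedSymbol_mulVec {ε : ι → R} (hε : ∀ i, ε i ^ 2 ≤ 1) (d : R)
    (ξ η : ι → R) :
    (1 - d ^ 2) * (ξ ⬝ᵥ ξ) * (η ⬝ᵥ η) ≤ η ⬝ᵥ signedSymbol ε d ξ *ᵥ η := by
  have cauchy_schwarz : ((ε * ξ) ⬝ᵥ η) ^ 2 ≤ (ξ ⬝ᵥ ξ) * (η ⬝ᵥ η) :=
    (dotProduct_sq_le _ _).trans <|
      mul_le_mul_of_nonneg_right (dotProduct_mul_self_le hε ξ) (dotProduct_self_nonneg η)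
  calc (1 - d ^ 2) * (ξ ⬝ᵥ ξ) * (η ⬝ᵥ η)
      = (ξ ⬝ᵥ ξ) * (η ⬝ᵥ η) - d ^ 2 * ((ξ ⬝ᵥ ξ) * (η ⬝ᵥ η)) := by ring
    _ ≤ (ξ ⬝ᵥ ξ) * (η ⬝ᵥ η) - d ^ 2 * ((ε * ξ) ⬝ᵥ η) ^ 2 := by gcongr
    _ ≤ (ξ ⬝ᵥ ξ) * (η ⬝ᵥ η) + (ξ ⬝ᵥ η + d * ((ε * ξ) ⬝ᵥ η)) ^ 2
          - d ^ 2 * ((ε * ξ) ⬝ᵥ η) ^ 2 := by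
        gcongr
        exact le_add_of_nonneg_right (sq_nonneg _)
    _ = η ⬝ᵥ signedSymbol ε d ξ *ᵥ η := (dotProduct_signedSymbol_mulVec ε d ξ η).symm

theorem dotProduct_signedSymbol_mulVec_pos {ε : ι → R} (hε : ∀ i, ε i ^ 2 ≤ 1) {d : R}
    (hd : |d| < 1) {ξ η : ι → R} (hξ : ξ ≠ 0) (hη : η ≠ 0) :
    0 < η ⬝ᵥ signedSymbol ε d ξ *ᵥ η := by
  have hd' : 0 < 1 - d ^ 2 := sub_pos.mpr ((sq_lt_one_iff_abs_lt_one d).mpr hd)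
  calc 0 < (1 - d ^ 2) * (ξ ⬝ᵥ ξ) * (η ⬝ᵥ η) :=
        mul_pos (mul_pos hd' (dotProduct_self_pos hξ)) (dotProduct_self_pos hη)
    _ ≤ η ⬝ᵥ signedSymbol ε d ξ *ᵥ η := le_dotProduct_signedSymbol_mulVec hε d ξ η

end SignedSymbol

theorem sub_three_div_sub_one_le {R : Type*} [Field R] [LinearOrder R] [IsStrictOrderedRing R]
    {x : R} (hx : 3 / 2 ≤ x) : (x - 3) / (x - 1) ≤ 1 - (2 / (x - 1) / 2) ^ 2 := by
  have hx₁ : 0 < x - 1 := by linarith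
  have hc₀ : 0 ≤ 2 / (x - 1) := by positivity
  have hc₄ : 2 / (x - 1) ≤ 4 := (div_le_iff₀ hx₁).mpr (by linarith)
  calc (x - 3) / (x - 1) = 1 - 2 / (x - 1) := by rw [one_sub_div hx₁.ne']; ring
    _ ≤ 1 - (2 / (x - 1) / 2) ^ 2 := by nlinarith

theorem stmt_8_general {ι R : Type*} [Fintype ι] [DecidableEq ι]
    [Field R] [LinearOrder R] [IsStrictOrderedRing R] (o : ι) (c : R)
    (P : (ι → R) → ι → ι → R)
    (hP : ∀ (ξ : ι → R) (i j : ι), P ξ i j =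
      if i = j then (∑ k, ξ k ^ 2) + (if i = o then 1 + c else 1 - c) * ξ i ^ 2
      else if i = o ∨ j = o then ξ i * ξ j
      else (1 - c) * ξ i * ξ j) :
    (∀ ξ η : ι → R,
      (1 - (c / 2) ^ 2) * (∑ k, ξ k ^ 2) * (∑ k, η k ^ 2) ≤ ∑ i, ∑ j, η i * P ξ i j * η j) ∧
    (|c| < 2 → ∀ ξ : ι → R, ξ ≠ 0 → ∀ η : ι → R, η ≠ 0 →
      0 < ∑ i, ∑ j, η i * P ξ i j * η j) := by
  have sum_sq (v : ι → R) : ∑ k, v k ^ 2 = v ⬝ᵥ v := by simp only [dotProduct, sq]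
  have hε (i : ι) : (minkowskiSign o i : R) ^ 2 ≤ 1 := (minkowskiSign_sq o i).le
  have quadratic_form (ξ η : ι → R) : ∑ i, ∑ j, η i * P ξ i j * η j =
      η ⬝ᵥ signedSymbol (minkowskiSign o) (c / 2) ξ *ᵥ η := by
    simp only [← toBilin'_apply', toBilin'_apply, signedSymbol_minkowskiSign_apply, hP, sum_sq,
      mul_div_cancel₀ c (two_ne_zero' R)]
  simp only [quadratic_form, sum_sq]
  refine ⟨le_dotProduct_signedSymbol_mulVec hε (c / 2), fun hc ξ hξ η hη ↦
    dotProduct_signedSymbol_mulVec_pos hε ?_ hξ hη⟩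
  rwa [abs_div, abs_two, div_lt_one two_pos]

/-- Strong ellipticity: the symmetrized symbol `P(ξ)` of the operator `A`
arising in the tensor decomposition satisfies
`ηᵀ P(ξ) η ≥ ((n−3)/(n−1)) |ξ|² |η|²`; in particular it is positive definite
for `ξ ≠ 0`. -/
theorem stmt_8 (n : ℕ) (hn : 4 ≤ n)
    (P : (Fin (n + 1) → ℝ) → Fin (n + 1) → Fin (n + 1) → ℝ)
    (hP : ∀ (ξ : Fin (n + 1) → ℝ) (i j : Fin (n + 1)), P ξ i j =
      if i = j then
        (∑ k, ξ k ^ 2) +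
          (if i = 0 then 1 + 2 / ((n : ℝ) - 1) else 1 - 2 / ((n : ℝ) - 1)) * ξ i ^ 2
      else if i = 0 ∨ j = 0 then ξ i * ξ j
      else (1 - 2 / ((n : ℝ) - 1)) * ξ i * ξ j) :
    (∀ ξ η : Fin (n + 1) → ℝ,
      ((n : ℝ) - 3) / ((n : ℝ) - 1) * (∑ k, ξ k ^ 2) * (∑ k, η k ^ 2) ≤
        ∑ i, ∑ j, η i * P ξ i j * η j) ∧
    (∀ ξ : Fin (n + 1) → ℝ, ξ ≠ 0 → ∀ η : Fin (n + 1) → ℝ, η ≠ 0 →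
      0 < ∑ i, ∑ j, η i * P ξ i j * η j) := by
  obtain ⟨bound, pos⟩ := stmt_8_general 0 (2 / ((n : ℝ) - 1)) P hP
  have hn' : (4 : ℝ) ≤ n := mod_cast hn
  have hc : |2 / ((n : ℝ) - 1)| < 2 := by
    rw [abs_of_pos (div_pos two_pos (by linarith))]
    exact div_lt_self two_pos (by linarith)
  refine ⟨fun ξ η ↦ le_trans ?_ (bound ξ η), pos hc⟩
  gcongr
  exact sub_three_div_sub_one_le (by linarith)
end

section
/- Let n ≥ 4 and let A, B be real numbers with |A| ≤ 1, |B| ≤ 1 and |A + B| ≤ 1. Then (n−1) + (n−3)(A+B)² + 4A(A+B) ≥ n−3. Equivalently, (n−1) + (n+1)A² + 2(n−1)AB + (n−3)B² ≥ n−3. -/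
section OrderedRing

variable {R : Type*} [CommRing R]

-- In terms of `s = A + B` the left side is `(ν - 1) + (ν + 1) * s ^ 2 - 4 * B * s`. Completing the
-- square in `B * s`, rather than in `s`, avoids dividing by `ν + 1`.
theorem symbol_eq_add_squares (ν A B : R) :
    (ν - 1) + (ν - 3) * (A + B) ^ 2 + 4 * A * (A + B) =
      (ν - 3) + (2 * (1 - B * (A + B)) ^ 2 + (ν + 1 - 2 * B ^ 2) * (A + B) ^ 2) := by
  ring

theorem symbol_eq_expanded (ν A B : R) :
    (ν - 1) + (ν - 3) * (A + B) ^ 2 + 4 * A * (A + B) =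
      (ν - 1) + (ν + 1) * A ^ 2 + 2 * (ν - 1) * A * B + (ν - 3) * B ^ 2 := by
  ring

variable [LinearOrder R] [IsStrictOrderedRing R]

theorem sub_three_le_symbol {ν B : R} (hB : 2 * B ^ 2 ≤ ν + 1) (A : R) :
    ν - 3 ≤ (ν - 1) + (ν - 3) * (A + B) ^ 2 + 4 * A * (A + B) := by
  have square_nonneg : 0 ≤ 2 * (1 - B * (A + B)) ^ 2 := by positivity
  have remainder_nonneg : 0 ≤ (ν + 1 - 2 * B ^ 2) * (A + B) ^ 2 :=
    mul_nonneg (sub_nonneg.mpr hB) (sq_nonneg _)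
  rw [symbol_eq_add_squares]
  exact le_add_of_nonneg_right (add_nonneg square_nonneg remainder_nonneg)

theorem stmt_9_general {ν B : R} (hB : 2 * B ^ 2 ≤ ν + 1) (A : R) :
    (ν - 1) + (ν - 3) * (A + B) ^ 2 + 4 * A * (A + B) ≥ ν - 3 ∧
    (ν - 1) + (ν + 1) * A ^ 2 + 2 * (ν - 1) * A * B + (ν - 3) * B ^ 2 ≥ ν - 3 :=
  ⟨sub_three_le_symbol hB A, symbol_eq_expanded ν A B ▸ sub_three_le_symbol hB A⟩

end OrderedRing

/-- The scalar inequality underlying the strong ellipticity estimate. -/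
theorem stmt_9 (n : ℕ) (hn : 4 ≤ n) (A B : ℝ)
    (hA : |A| ≤ 1) (hB : |B| ≤ 1) (hAB : |A + B| ≤ 1) :
    ((n : ℝ) - 1) + ((n : ℝ) - 3) * (A + B) ^ 2 + 4 * A * (A + B) ≥ (n : ℝ) - 3 ∧
    ((n : ℝ) - 1) + ((n : ℝ) + 1) * A ^ 2 + 2 * ((n : ℝ) - 1) * A * B
      + ((n : ℝ) - 3) * B ^ 2 ≥ (n : ℝ) - 3 := by
  have hn_real : (4 : ℝ) ≤ n := by exact_mod_cast hn
  exact stmt_9_general (by linarith [(sq_le_one_iff_abs_le_one B).mpr hB]) A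
end

section
/- Let n ≥ 4 and let Ω ⊂ ℝ^{1+n} be a bounded domain (connected open set) with smooth boundary. Write α = 1 + 2/(n−1) and β = 1 − 2/(n−1), let Δ denote the full Laplacian Σ_{i=0}^n ∂ᵢ² on ℝ^{1+n}, and let v = (v₀, v₁, …, vₙ) be a vector field whose components are smooth on an open neighborhood of the closure of Ω. If v satisfies Δv₀ + α Σ_{k=0}^n ∂₀∂ₖ vₖ = 0 and Δvⱼ + β Σ_{k=0}^n ∂ⱼ∂ₖ vₖ = 0 for all 1 ≤ j ≤ n on Ω, and v = 0 on ∂Ω, then v ≡ 0 on Ω. -/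
/-!
Energy method. Multiplying the `i`-th equation `Δvᵢ + aᵢ ∂ᵢ(div v) = 0` by `vᵢ / aᵢ` and summing
over `i` shows that the vector field
`Hⱼ = Σᵢ vᵢ ∂ⱼvᵢ / aᵢ + vⱼ div v` has divergence `Σᵢ |∇vᵢ|² / aᵢ + (div v)² ≥ 0` on `Ω`. Since `H`
vanishes on `∂Ω`, this divergence has integral zero, so every `∇vᵢ` vanishes on `Ω`, and `v = 0`
follows from the boundary condition.

The integral is computed without a normal vector: a function with bounded gradient on `Ω` that
vanishes on `∂Ω` extends by zero to a Lipschitz function on the whole space, whose gradient has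
integral zero and vanishes almost everywhere off `Ω`, even if `∂Ω` has positive measure.
-/

open MeasureTheory Set Metric Topology
open scoped NNReal

section ZeroExtension

variable {E F : Type*} [NormedAddCommGroup E] [NormedSpace ℝ E] [ProperSpace E]
  [NormedAddCommGroup F] [NormedSpace ℝ F] {Ω : Set E} {f : E → F} {C : ℝ≥0}

theorem norm_le_mul_dist_of_eqOn_zero_frontier (hΩ : IsOpen Ω)
    (hf : ContinuousOn f (closure Ω)) (hf' : DifferentiableOn ℝ f Ω)
    (hC : ∀ z ∈ Ω, ‖fderiv ℝ f z‖₊ ≤ C) (h0 : EqOn f 0 (frontier Ω))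
    {x y : E} (hx : x ∈ Ω) (hy : y ∉ Ω) : ‖f x‖ ≤ C * dist x y := by
  obtain ⟨w, hw, hxw⟩ := hΩ.isClosed_compl.exists_infDist_eq_dist ⟨y, hy⟩ x
  have hball : ball x (dist x w) ⊆ Ω := hxw ▸ ball_infDist_compl_subset
  have hpos : 0 < dist x w := dist_pos.2 fun h => hw (h ▸ hx)
  have hLip : LipschitzOnWith C f (closure (ball x (dist x w))) :=
    ((convex_ball x _).lipschitzOnWith_of_nnnorm_fderiv_le
      (fun z hz => hf'.differentiableAt (hΩ.mem_nhds (hball hz)))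
      fun z hz => hC z (hball hz)).closure (hf.mono (closure_mono hball))
  have hw_mem : w ∈ closure (ball x (dist x w)) := by
    rw [closure_ball x hpos.ne', mem_closedBall']
  have hfw : f w = 0 := h0 (hΩ.frontier_eq ▸ ⟨closure_mono hball hw_mem, hw⟩)
  calc ‖f x‖ = dist (f x) (f w) := by rw [hfw, dist_zero_right]
    _ ≤ C * dist x w := hLip.dist_le_mul _ (subset_closure (mem_ball_self hpos)) _ hw_mem
    _ ≤ C * dist x y := by
      rw [← hxw]
      exact mul_le_mul_of_nonneg_left (infDist_le_dist_of_mem hy) C.coe_nonneg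

theorem lipschitzWith_indicator_of_eqOn_zero_frontier (hΩ : IsOpen Ω)
    (hf : ContinuousOn f (closure Ω)) (hf' : DifferentiableOn ℝ f Ω)
    (hC : ∀ z ∈ Ω, ‖fderiv ℝ f z‖₊ ≤ C) (h0 : EqOn f 0 (frontier Ω)) :
    LipschitzWith C (Ω.indicator f) := by
  have hexit {x y : E} (hx : x ∈ Ω) (hy : y ∉ Ω) : ‖f x‖ ≤ C * dist x y :=
    norm_le_mul_dist_of_eqOn_zero_frontier hΩ hf hf' hC h0 hx hy
  refine LipschitzWith.of_dist_le_mul fun x y => ?_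
  by_cases hx : x ∈ Ω <;> by_cases hy : y ∈ Ω
  · rw [indicator_of_mem hx, indicator_of_mem hy]
    by_cases hseg : segment ℝ x y ⊆ Ω
    · exact ((convex_segment x y).lipschitzOnWith_of_nnnorm_fderiv_le
        (fun z hz => hf'.differentiableAt (hΩ.mem_nhds (hseg hz)))
        fun z hz => hC z (hseg hz)).dist_le_mul _ (left_mem_segment ℝ x y) _
          (right_mem_segment ℝ x y)
    · obtain ⟨w, hw, hwΩ⟩ := not_subset.1 hseg
      calc dist (f x) (f y) ≤ ‖f x‖ + ‖f y‖ := dist_le_norm_add_norm _ _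
        _ ≤ C * dist x w + C * dist y w := add_le_add (hexit hx hwΩ) (hexit hy hwΩ)
        _ = C * dist x y := by
          rw [dist_comm y w, ← mul_add, dist_add_dist_of_mem_segment hw]
  · simpa [hx, hy] using hexit hx hy
  · simpa [hx, hy, dist_comm x y] using hexit hy hx
  · simpa [hx, hy] using mul_nonneg C.coe_nonneg dist_nonneg

theorem eqOn_zero_of_fderiv_eq_zero_of_eqOn_zero_frontier [Nontrivial E] (hΩ : IsOpen Ω)
    (hΩb : Bornology.IsBounded Ω) (hf : ContinuousOn f (closure Ω))
    (hf' : DifferentiableOn ℝ f Ω) (hfderiv : EqOn (fderiv ℝ f) 0 Ω)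
    (h0 : EqOn f 0 (frontier Ω)) : EqOn f 0 Ω := by
  have hconst : ∀ x y, Ω.indicator f x = Ω.indicator f y := (LipschitzWith.zero_iff _).1 <|
    lipschitzWith_indicator_of_eqOn_zero_frontier hΩ hf hf'
      (fun z hz => by simp [hfderiv hz]) h0
  obtain ⟨y, hy⟩ : ∃ y, y ∉ Ω := (ne_univ_iff_exists_notMem Ω).1 fun h =>
    NormedSpace.unbounded_univ ℝ E (h ▸ hΩb)
  intro x hx
  simpa [hx, hy] using hconst x y

end ZeroExtension

section Integration

variable {E : Type*} [NormedAddCommGroup E] [NormedSpace ℝ E] [FiniteDimensional ℝ E]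
  [MeasurableSpace E] [BorelSpace E] (μ : Measure E) [μ.IsAddHaarMeasure]

-- Where `f` is not differentiable the claim holds because `fderiv` is then zero by convention.
theorem ae_restrict_fderiv_eq_zero_of_eqOn_zero {f : E → ℝ} {s : Set E} (hs : MeasurableSet s)
    (hf : EqOn f 0 s) : ∀ᵐ x ∂μ.restrict s, fderiv ℝ f x = 0 := by
  rcases subsingleton_or_nontrivial E with hE | hE
  · exact .of_forall fun x => Subsingleton.elim _ _
  obtain ⟨e, he⟩ := exists_ne (0 : E)
  set t := s ∩ {x | DifferentiableAt ℝ f x}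
  have ht : MeasurableSet t := hs.inter (measurableSet_of_differentiableAt ℝ f)
  have happrox : ApproximatesLinearOn (fun x => f x • e) (0 : E →L[ℝ] E) t 0 := by
    intro x hx y hy
    simp [hf hx.1, hf hy.1]
  have hderiv := happrox.norm_fderiv_sub_le μ ht (fun x => (fderiv ℝ f x).smulRight e)
    fun x hx => (hx.2.hasFDerivAt.smul_const e).hasFDerivWithinAt
  rw [ae_restrict_iff' ht] at hderiv
  rw [ae_restrict_iff' hs]
  filter_upwards [hderiv] with x hx hxs
  by_cases hd : DifferentiableAt ℝ f x
  · simpa [he] using hx ⟨hxs, hd⟩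
  · exact fderiv_zero_of_not_differentiableAt hd

theorem integral_fderiv_apply_eq_zero_of_lipschitzWith {f : E → ℝ} {C : ℝ≥0}
    (hf : LipschitzWith C f) (hfs : HasCompactSupport f) (e : E) :
    ∫ x, fderiv ℝ f x e ∂μ = 0 := by
  have hline : ∫ x, lineDeriv ℝ f x e ∂μ = 0 := by
    simpa [lineDeriv] using
      (LipschitzWith.integral_lineDeriv_mul_eq (μ := μ) (LipschitzWith.const (1 : ℝ)) hf hfs
        (-e)).symm
  rw [← hline]
  refine integral_congr_ae ?_
  filter_upwards [hf.ae_differentiableAt (μ := μ)] with x hx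
  exact hx.lineDeriv_eq_fderiv.symm

theorem setIntegral_fderiv_apply_eq_zero_of_eqOn_zero_frontier {Ω : Set E} (hΩ : IsOpen Ω)
    (hΩb : Bornology.IsBounded Ω) {f : E → ℝ} (hf : ContinuousOn f (closure Ω))
    (hf' : DifferentiableOn ℝ f Ω) {C : ℝ≥0} (hC : ∀ z ∈ Ω, ‖fderiv ℝ f z‖₊ ≤ C)
    (h0 : EqOn f 0 (frontier Ω)) (e : E) : ∫ z in Ω, fderiv ℝ f z e ∂μ = 0 := by
  have hLip : LipschitzWith C (Ω.indicator f) :=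
    lipschitzWith_indicator_of_eqOn_zero_frontier hΩ hf hf' hC h0
  have hsupp : HasCompactSupport (Ω.indicator f) :=
    .of_support_subset_isCompact hΩb.isCompact_closure
      (support_indicator_subset.trans subset_closure)
  have hout : ∀ᵐ z ∂μ, z ∉ Ω → fderiv ℝ (Ω.indicator f) z e = 0 := by
    have hzero := ae_restrict_fderiv_eq_zero_of_eqOn_zero μ hΩ.measurableSet.compl
      fun z (hz : z ∉ Ω) => indicator_of_notMem hz f
    filter_upwards [(ae_restrict_iff' hΩ.measurableSet.compl).1 hzero] with z hz hzΩ
    rw [hz hzΩ, zero_apply]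
  calc ∫ z in Ω, fderiv ℝ f z e ∂μ
      = ∫ z in Ω, fderiv ℝ (Ω.indicator f) z e ∂μ :=
        setIntegral_congr_fun hΩ.measurableSet fun z hz => by
          have heq : Ω.indicator f =ᶠ[𝓝 z] f :=
            (eqOn_indicator (s := Ω)).eventuallyEq_of_mem (hΩ.mem_nhds hz)
          simp only [heq.fderiv_eq]
    _ = ∫ z, fderiv ℝ (Ω.indicator f) z e ∂μ :=
        setIntegral_eq_integral_of_ae_compl_eq_zero hout
    _ = 0 := integral_fderiv_apply_eq_zero_of_lipschitzWith μ hLip hsupp e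

end Integration

theorem eqOn_zero_of_setIntegral_eq_zero {X : Type*} [TopologicalSpace X] [MeasurableSpace X]
    [OpensMeasurableSpace X] {μ : Measure X} [μ.IsOpenPosMeasure] {U : Set X} {g : X → ℝ}
    (hU : IsOpen U) (hg : ContinuousOn g U) (hgi : IntegrableOn g U μ) (hg0 : ∀ x ∈ U, 0 ≤ g x)
    (hint : ∫ x in U, g x ∂μ = 0) : EqOn g 0 U := by
  have hae : g =ᵐ[μ.restrict U] 0 := (setIntegral_eq_zero_iff_of_nonneg_ae
    (ae_restrict_of_forall_mem hU.measurableSet hg0) hgi).1 hint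
  exact Measure.eqOn_open_of_ae_eq hae hU hg continuousOn_const

section VectorFields

variable {ι : Type*} [DecidableEq ι]

/-- The partial derivative `∂ᵢ f` of a function on `ℝ^ι`. It is zero where `f` is not
differentiable. -/
noncomputable def partialDeriv (i : ι) (f : (ι → ℝ) → ℝ) (z : ι → ℝ) : ℝ :=
  fderiv ℝ f z (Pi.single i 1)

theorem fderiv_eq_zero_of_partialDeriv_eq_zero [Finite ι] {f : (ι → ℝ) → ℝ} {z : ι → ℝ}
    (h : ∀ i, partialDeriv i f z = 0) : fderiv ℝ f z = 0 :=
  ContinuousLinearMap.coe_injective <| LinearMap.pi_ext' fun i => LinearMap.ext_ring (h i)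

variable [Fintype ι] {Ω V : Set (ι → ℝ)} {v : ι → (ι → ℝ) → ℝ}

/-- The divergence `Σₖ ∂ₖ vₖ` of a vector field given by its components. -/
noncomputable def divergence (v : ι → (ι → ℝ) → ℝ) (z : ι → ℝ) : ℝ :=
  ∑ k, partialDeriv k (v k) z

/-- The Laplacian `Σᵢ ∂ᵢ² f`, in coordinates because `ι → ℝ` carries the sup norm and hence no
inner product. -/
noncomputable def laplacian (f : (ι → ℝ) → ℝ) (z : ι → ℝ) : ℝ :=
  ∑ i, partialDeriv i (partialDeriv i f) z

/-- The vector field `Hⱼ = Σᵢ cᵢ vᵢ ∂ⱼvᵢ + γ vⱼ div v`, the boundary term in the integration by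
parts of `Σᵢ vᵢ (cᵢ Δvᵢ + γ ∂ᵢ(div v))`. -/
noncomputable def energyFlux (c : ι → ℝ) (γ : ℝ) (v : ι → (ι → ℝ) → ℝ) (j : ι) (z : ι → ℝ) : ℝ :=
  ∑ i, c i * (v i z * partialDeriv j (v i) z) + γ * (v j z * divergence v z)

theorem contDiffOn_partialDeriv {m : ℕ∞} {f : (ι → ℝ) → ℝ} (hV : IsOpen V)
    (hf : ContDiffOn ℝ (m + 1) f V) (i : ι) : ContDiffOn ℝ m (partialDeriv i f) V :=
  (hf.fderiv_of_isOpen hV le_rfl).clm_apply contDiffOn_const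

theorem contDiffOn_divergence {m : ℕ∞} (hV : IsOpen V)
    (hv : ∀ i, ContDiffOn ℝ (m + 1) (v i) V) : ContDiffOn ℝ m (divergence v) V :=
  ContDiffOn.sum fun k _ => contDiffOn_partialDeriv hV (hv k) k

theorem contDiffOn_energyFlux {m : ℕ∞} (hV : IsOpen V)
    (hv : ∀ i, ContDiffOn ℝ (m + 1) (v i) V) (c : ι → ℝ) (γ : ℝ) (j : ι) :
    ContDiffOn ℝ m (energyFlux c γ v j) V := by
  have hvm (i : ι) : ContDiffOn ℝ m (v i) V := (hv i).of_le le_self_add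
  exact (ContDiffOn.sum fun i _ => contDiffOn_const.mul
    ((hvm i).mul (contDiffOn_partialDeriv hV (hv i) j))).add
      (contDiffOn_const.mul ((hvm j).mul (contDiffOn_divergence hV hv)))

theorem setIntegral_divergence_eq_zero (hΩ : IsOpen Ω) (hΩb : Bornology.IsBounded Ω)
    (hV : IsOpen V) (hΩV : closure Ω ⊆ V) {H : ι → (ι → ℝ) → ℝ}
    (hH : ∀ j, ContDiffOn ℝ 1 (H j) V) (h0 : ∀ j, EqOn (H j) 0 (frontier Ω)) :
    ∫ z in Ω, divergence H z = 0 := by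
  have hΩ_sub : Ω ⊆ V := subset_closure.trans hΩV
  have hK : IsCompact (closure Ω) := hΩb.isCompact_closure
  have hfderiv (j : ι) : ContinuousOn (fderiv ℝ (H j)) (closure Ω) :=
    ((hH j).continuousOn_fderiv_of_isOpen hV le_rfl).mono hΩV
  have hint (j : ι) : IntegrableOn (partialDeriv j (H j)) Ω :=
    (((hfderiv j).clm_apply continuousOn_const).integrableOn_compact hK).mono_set subset_closure
  have hzero (j : ι) : ∫ z in Ω, partialDeriv j (H j) z = 0 := by
    obtain ⟨C, hC⟩ := hK.exists_bound_of_continuousOn (hfderiv j)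
    exact setIntegral_fderiv_apply_eq_zero_of_eqOn_zero_frontier volume hΩ hΩb
      ((hH j).continuousOn.mono hΩV) (((hH j).differentiableOn one_ne_zero).mono hΩ_sub)
      (C := C.toNNReal)
      (fun z hz => NNReal.le_toNNReal_of_coe_le (hC z (subset_closure hz))) (h0 j) _
  calc ∫ z in Ω, divergence H z = ∑ j, ∫ z in Ω, partialDeriv j (H j) z :=
        integral_finsetSum _ fun j _ => hint j
    _ = 0 := Finset.sum_eq_zero fun j _ => hzero j

theorem eqOn_zero_divergence_of_nonneg (hΩ : IsOpen Ω) (hΩb : Bornology.IsBounded Ω)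
    (hV : IsOpen V) (hΩV : closure Ω ⊆ V) {H : ι → (ι → ℝ) → ℝ}
    (hH : ∀ j, ContDiffOn ℝ 1 (H j) V) (h0 : ∀ j, EqOn (H j) 0 (frontier Ω))
    (hnonneg : ∀ z ∈ Ω, 0 ≤ divergence H z) : EqOn (divergence H) 0 Ω := by
  have hcont : ContinuousOn (divergence H) (closure Ω) :=
    (contDiffOn_divergence (m := 0) hV (by simpa using hH)).continuousOn.mono hΩV
  exact eqOn_zero_of_setIntegral_eq_zero hΩ (hcont.mono subset_closure)
    ((hcont.integrableOn_compact hΩb.isCompact_closure).mono_set subset_closure) hnonneg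
    (setIntegral_divergence_eq_zero hΩ hΩb hV hΩV hH h0)

theorem partialDeriv_divergence {z : ι → ℝ} (j : ι)
    (hv : ∀ k, DifferentiableAt ℝ (partialDeriv k (v k)) z) :
    partialDeriv j (divergence v) z = ∑ k, partialDeriv j (partialDeriv k (v k)) z := by
  change fderiv ℝ (fun y => ∑ k, partialDeriv k (v k) y) z _ = _
  rw [fderiv_fun_sum fun k _ => hv k, sum_apply]
  rfl

theorem partialDeriv_energyFlux {z : ι → ℝ} (c : ι → ℝ) (γ : ℝ) (j : ι)
    (hv : ∀ i, DifferentiableAt ℝ (v i) z)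
    (hv' : ∀ i k, DifferentiableAt ℝ (partialDeriv k (v i)) z) :
    partialDeriv j (energyFlux c γ v j) z =
      ∑ i, c i * (v i z * partialDeriv j (partialDeriv j (v i)) z + partialDeriv j (v i) z ^ 2) +
        γ * (v j z * partialDeriv j (divergence v) z +
          divergence v z * partialDeriv j (v j) z) := by
  have hdiv : DifferentiableAt ℝ (divergence v) z :=
    DifferentiableAt.fun_sum fun k _ => hv' k k
  have hflux := (HasFDerivAt.fun_sum (u := Finset.univ) fun i _ =>
    ((hv i).hasFDerivAt.mul (hv' i j).hasFDerivAt).const_mul (c i)).add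
      (((hv j).hasFDerivAt.mul hdiv.hasFDerivAt).const_mul γ)
  have hfderiv : fderiv ℝ (energyFlux c γ v j) z = _ := hflux.fderiv
  simp [partialDeriv, hfderiv, sq, mul_add]

theorem divergence_energyFlux {z : ι → ℝ} (c : ι → ℝ) (γ : ℝ)
    (hv : ∀ i, DifferentiableAt ℝ (v i) z)
    (hv' : ∀ i k, DifferentiableAt ℝ (partialDeriv k (v i)) z) :
    divergence (energyFlux c γ v) z =
      ∑ i, v i z * (c i * laplacian (v i) z + γ * partialDeriv i (divergence v) z) +
        (∑ i, c i * ∑ j, partialDeriv j (v i) z ^ 2 + γ * divergence v z ^ 2) := by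
  have hlap : ∑ j, ∑ i, c i * (v i z * partialDeriv j (partialDeriv j (v i)) z) =
      ∑ i, v i z * (c i * laplacian (v i) z) := by
    rw [Finset.sum_comm]
    simp only [laplacian, Finset.mul_sum, mul_left_comm]
  have hgrad : ∑ j, ∑ i, c i * partialDeriv j (v i) z ^ 2 =
      ∑ i, c i * ∑ j, partialDeriv j (v i) z ^ 2 := by
    rw [Finset.sum_comm]
    simp only [Finset.mul_sum]
  have hdiv : ∑ j, γ * (divergence v z * partialDeriv j (v j) z) = γ * divergence v z ^ 2 := by
    rw [← Finset.mul_sum, ← Finset.mul_sum, sq]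
    rfl
  rw [divergence]
  simp only [partialDeriv_energyFlux c γ _ hv hv', mul_add, Finset.sum_add_distrib, hlap, hgrad,
    hdiv]
  simp only [mul_left_comm γ (v _ z)]
  ring

theorem fderiv_eq_zero_of_energy_nonpos {z : ι → ℝ} {c : ι → ℝ} (hc : 0 ≤ c) {γ : ℝ}
    (hγ : 0 ≤ γ)
    (henergy : ∑ i, c i * ∑ j, partialDeriv j (v i) z ^ 2 + γ * divergence v z ^ 2 ≤ 0)
    {i : ι} (hi : 0 < c i) : fderiv ℝ (v i) z = 0 := by
  have hgrad_nonneg (k : ι) : 0 ≤ ∑ j, partialDeriv j (v k) z ^ 2 :=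
    Finset.sum_nonneg fun j _ => sq_nonneg _
  have hle : c i * ∑ j, partialDeriv j (v i) z ^ 2 ≤ 0 :=
    (Finset.single_le_sum (fun k _ => mul_nonneg (hc k) (hgrad_nonneg k))
      (Finset.mem_univ i)).trans
      ((le_add_of_nonneg_right (mul_nonneg hγ (sq_nonneg _))).trans henergy)
  have hgrad : ∑ j, partialDeriv j (v i) z ^ 2 = 0 :=
    le_antisymm (nonpos_of_mul_nonpos_right hle hi) (hgrad_nonneg i)
  refine fderiv_eq_zero_of_partialDeriv_eq_zero fun j => ?_
  exact pow_eq_zero_iff two_ne_zero |>.1 <|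
    (Finset.sum_eq_zero_iff_of_nonneg fun j _ => sq_nonneg _).1 hgrad j (Finset.mem_univ j)

theorem eqOn_zero_of_sum_mul_laplacian_add_eq_zero (hΩ : IsOpen Ω)
    (hΩb : Bornology.IsBounded Ω) (hV : IsOpen V) (hΩV : closure Ω ⊆ V)
    (hv : ∀ i, ContDiffOn ℝ 2 (v i) V) (h0 : ∀ i, EqOn (v i) 0 (frontier Ω))
    {c : ι → ℝ} (hc : 0 ≤ c) {γ : ℝ} (hγ : 0 ≤ γ)
    (heq : ∀ z ∈ Ω, ∑ i, v i z *
      (c i * laplacian (v i) z + γ * partialDeriv i (divergence v) z) = 0)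
    {i : ι} (hi : 0 < c i) : EqOn (v i) 0 Ω := by
  have hΩ_sub : Ω ⊆ V := subset_closure.trans hΩV
  have hdiff (k : ι) : DifferentiableOn ℝ (v k) V := (hv k).differentiableOn two_ne_zero
  have hdiff' (k j : ι) : DifferentiableOn ℝ (partialDeriv j (v k)) V :=
    (contDiffOn_partialDeriv (m := 1) hV (hv k) j).differentiableOn one_ne_zero
  have henergy : ∀ z ∈ Ω, divergence (energyFlux c γ v) z =
      ∑ i, c i * ∑ j, partialDeriv j (v i) z ^ 2 + γ * divergence v z ^ 2 := fun z hz => by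
    have hzV : V ∈ 𝓝 z := hV.mem_nhds (hΩ_sub hz)
    rw [divergence_energyFlux c γ (fun k => (hdiff k).differentiableAt hzV)
      fun k j => (hdiff' k j).differentiableAt hzV, heq z hz, zero_add]
  have hzero : EqOn (divergence (energyFlux c γ v)) 0 Ω := by
    refine eqOn_zero_divergence_of_nonneg hΩ hΩb hV hΩV
      (contDiffOn_energyFlux (m := 1) hV hv c γ)
      (fun j z hz => by simp [energyFlux, fun k => h0 k hz]) fun z hz => ?_
    rw [henergy z hz]
    exact add_nonneg (Finset.sum_nonneg fun k _ => mul_nonneg (hc k) (by positivity))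
      (by positivity)
  have hgrad : EqOn (fderiv ℝ (v i)) 0 Ω := fun z hz =>
    fderiv_eq_zero_of_energy_nonpos hc hγ ((henergy z hz).symm.trans (hzero hz)).le hi
  have : Nonempty ι := ⟨i⟩
  exact eqOn_zero_of_fderiv_eq_zero_of_eqOn_zero_frontier hΩ hΩb
    ((hdiff i).continuousOn.mono hΩV) ((hdiff i).mono hΩ_sub) hgrad (h0 i)

-- Components with `aᵢ = 0` are harmonic, hence zero. The energy of the others is taken with the
-- weights `a⁻¹`, where `0⁻¹ = 0` leaves out the components already known to vanish.
theorem stmt_11_general (hΩ : IsOpen Ω) (hΩb : Bornology.IsBounded Ω) (hV : IsOpen V)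
    (hΩV : closure Ω ⊆ V) (hv : ∀ i, ContDiffOn ℝ 2 (v i) V) {a : ι → ℝ} (ha : ∀ i, 0 ≤ a i)
    (heq : ∀ i, ∀ z ∈ Ω,
      laplacian (v i) z + a i * ∑ k, partialDeriv i (partialDeriv k (v k)) z = 0)
    (h0 : ∀ i, EqOn (v i) 0 (frontier Ω)) (i : ι) : EqOn (v i) 0 Ω := by
  have hsystem (i : ι) : ∀ z ∈ Ω, laplacian (v i) z + a i * partialDeriv i (divergence v) z = 0 :=
    fun z hz => by
      rw [partialDeriv_divergence i fun k =>
        ((contDiffOn_partialDeriv (m := 1) hV (hv k) k).differentiableOn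
          one_ne_zero).differentiableAt (hV.mem_nhds (hΩV (subset_closure hz)))]
      exact heq i z hz
  have hharmonic (i : ι) (hai : a i = 0) : EqOn (v i) 0 Ω := by
    refine eqOn_zero_of_sum_mul_laplacian_add_eq_zero hΩ hΩb hV hΩV hv h0
      (c := Pi.single i 1) (γ := 0) (Pi.single_nonneg.2 zero_le_one) le_rfl (fun z hz => ?_)
      (by simp)
    have hlap : laplacian (v i) z = 0 := by simpa [hai] using hsystem i z hz
    simp [Pi.single_apply, hlap]
  by_cases hai : a i = 0
  · exact hharmonic i hai
  refine eqOn_zero_of_sum_mul_laplacian_add_eq_zero hΩ hΩb hV hΩV hv h0 (c := a⁻¹) (γ := 1)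
    (fun k => inv_nonneg.2 (ha k)) zero_le_one (fun z hz => Finset.sum_eq_zero fun k _ => ?_)
    (inv_pos.2 ((ha i).lt_of_ne' hai))
  by_cases hak : a k = 0
  · rw [hharmonic k hak hz, Pi.zero_apply, zero_mul]
  · have hfactor : a⁻¹ k * laplacian (v k) z + 1 * partialDeriv k (divergence v) z =
        (a k)⁻¹ * (laplacian (v k) z + a k * partialDeriv k (divergence v) z) := by
      rw [Pi.inv_apply]
      field_simp
    rw [hfactor, hsystem k z hz, mul_zero, mul_zero]

end VectorFields

/-- Uniqueness for the homogeneous Dirichlet problem for the elliptic system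
`A(t,x;∇)v = 0` arising in the tensor decomposition (`n ≥ 4`):
`Δv₀ + α Σₖ ∂₀∂ₖvₖ = 0`, `Δvⱼ + β Σₖ ∂ⱼ∂ₖvₖ = 0` (`1 ≤ j ≤ n`) on `Ω`,
with `v = 0` on `∂Ω`, imply `v ≡ 0` on `Ω`. Here `α = 1 + 2/(n−1)`,
`β = 1 − 2/(n−1)` and `Δ = Σᵢ ∂ᵢ²` is the full Laplacian on `ℝ^{1+n}`. -/
theorem stmt_11 (n : ℕ) (hn : 4 ≤ n) (Ω : Set (Fin (n + 1) → ℝ))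
    (hΩopen : IsOpen Ω) (hΩconn : IsConnected Ω)
    (hΩbdd : Bornology.IsBounded Ω)
    (v : Fin (n + 1) → (Fin (n + 1) → ℝ) → ℝ)
    (hv : ∃ V : Set (Fin (n + 1) → ℝ), IsOpen V ∧ closure Ω ⊆ V ∧
      ∀ i, ContDiffOn ℝ (⊤ : ℕ∞) (v i) V)
    (heq0 : ∀ z ∈ Ω,
      (∑ i, fderiv ℝ (fun y => fderiv ℝ (v 0) y (Pi.single i 1)) z (Pi.single i 1))
        + (1 + 2 / ((n : ℝ) - 1)) *
          (∑ k, fderiv ℝ (fun y => fderiv ℝ (v k) y (Pi.single k 1)) z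
            (Pi.single 0 1)) = 0)
    (heqj : ∀ j : Fin (n + 1), j ≠ 0 → ∀ z ∈ Ω,
      (∑ i, fderiv ℝ (fun y => fderiv ℝ (v j) y (Pi.single i 1)) z (Pi.single i 1))
        + (1 - 2 / ((n : ℝ) - 1)) *
          (∑ k, fderiv ℝ (fun y => fderiv ℝ (v k) y (Pi.single k 1)) z
            (Pi.single j 1)) = 0)
    (hbd : ∀ i : Fin (n + 1), ∀ z ∈ frontier Ω, v i z = 0) :
    ∀ i : Fin (n + 1), ∀ z ∈ Ω, v i z = 0 := by
  obtain ⟨V, hVopen, hΩV, hvV⟩ := hv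
  have hn' : (4 : ℝ) ≤ n := mod_cast hn
  have hratio : 0 ≤ 2 / ((n : ℝ) - 1) ∧ 2 / ((n : ℝ) - 1) ≤ 1 :=
    ⟨div_nonneg two_pos.le (by linarith), (div_le_one (by linarith)).2 (by linarith)⟩
  exact stmt_11_general hΩopen hΩbdd hVopen hΩV
    (fun i => (hvV i).of_le (WithTop.coe_le_coe.2 le_top))
    (a := Fin.cons (1 + 2 / ((n : ℝ) - 1)) fun _ => 1 - 2 / ((n : ℝ) - 1))
    (Fin.cases (by simp only [Fin.cons_zero]; linarith) fun j => by
      simp only [Fin.cons_succ]; linarith)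
    (Fin.cases heq0 fun j => heqj j.succ j.succ_ne_zero) hbd
end
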